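/- arXiv:1302.5535 — 6 statements merged into one kernel-verified Lean document; each statement's English description precedes it below -/
import Mathlib

section
/- Let A ∈ ℝ^{n×n} be nonsingular and 1 ≤ k ≤ d(A) − 1. Let b be a unit norm k-th worst-case GMRES initial vector with k-th GMRES polynomial p_k ∈ π_k and residual r_k = p_k(A)b. Then p_k is also the k-th GMRES polynomial of Aᵀ and the initial vector r_k/‖r_k‖; consequently p_k(Aᵀ)p_k(A)b = Ψ_k(A)² b. -/
open Polynomial Matrix

/-- The Euclidean norm of a real vector. -/
noncomputable def euclNorm {ι : Type*} [Fintype ι] (v : ι → ℝ) : ℝ :=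
  Real.sqrt (∑ i, v i ^ 2)

/-- The Euclidean norm of a complex vector. -/
noncomputable def euclNormC {ι : Type*} [Fintype ι] (v : ι → ℂ) : ℝ :=
  Real.sqrt (∑ i, ‖v i‖ ^ 2)

/-- The Euclidean inner product of two real vectors. -/
noncomputable def edot {ι : Type*} [Fintype ι] (u v : ι → ℝ) : ℝ := ∑ i, u i * v i

/-- `p ∈ π_k`: real polynomials of degree at most `k` with value `1` at the origin. -/
def IsPik (k : ℕ) (p : Polynomial ℝ) : Prop := p.natDegree ≤ k ∧ p.eval 0 = 1

/-- `p ∈ π_{k,ℂ}`: complex polynomials of degree at most `k` with value `1` at the origin. -/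
def IsPikC (k : ℕ) (p : Polynomial ℂ) : Prop := p.natDegree ≤ k ∧ p.eval 0 = 1

/-- The `k`-th GMRES residual norm `min_{p ∈ π_k} ‖p(A)v‖`. -/
noncomputable def gmresVal {ι : Type*} [Fintype ι] [DecidableEq ι]
    (A : Matrix ι ι ℝ) (k : ℕ) (v : ι → ℝ) : ℝ :=
  sInf {s : ℝ | ∃ p : Polynomial ℝ, IsPik k p ∧ s = euclNorm ((Polynomial.aeval A p).mulVec v)}

/-- The `k`-th worst-case GMRES approximation `Ψ_k(A) = max_{‖v‖=1} min_{p ∈ π_k} ‖p(A)v‖`. -/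
noncomputable def Psi {ι : Type*} [Fintype ι] [DecidableEq ι]
    (A : Matrix ι ι ℝ) (k : ℕ) : ℝ :=
  sSup {r : ℝ | ∃ v : ι → ℝ, euclNorm v = 1 ∧ r = gmresVal A k v}

/-- `d(A)`: the degree of the minimal polynomial of `A`. -/
noncomputable def dA {ι : Type*} [Fintype ι] [DecidableEq ι] (A : Matrix ι ι ℝ) : ℕ :=
  (minpoly ℝ A).natDegree

/-- `d(A,b)`: the smallest degree of a nonzero polynomial `q` with `q(A)b = 0`. -/
noncomputable def dAb {ι : Type*} [Fintype ι] [DecidableEq ι]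
    (A : Matrix ι ι ℝ) (b : ι → ℝ) : ℕ :=
  sInf {d : ℕ | ∃ q : Polynomial ℝ, q ≠ 0 ∧ q.natDegree = d ∧ (Polynomial.aeval A q).mulVec b = 0}

/-- `r = GMRES(A,b,k)`: `r = p(A)b` for some `p ∈ π_k` minimizing `‖p(A)b‖` over `π_k`. -/
def IsGmresRes {ι : Type*} [Fintype ι] [DecidableEq ι]
    (A : Matrix ι ι ℝ) (k : ℕ) (b r : ι → ℝ) : Prop :=
  ∃ p : Polynomial ℝ, IsPik k p ∧ r = (Polynomial.aeval A p).mulVec b ∧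
    ∀ q : Polynomial ℝ, IsPik k q → euclNorm r ≤ euclNorm ((Polynomial.aeval A q).mulVec b)

/-- `p` is the `k`-th GMRES polynomial of `A` and `b`: `p ∈ π_k` minimizes `‖p(A)b‖`. -/
def IsGmresPoly {ι : Type*} [Fintype ι] [DecidableEq ι]
    (A : Matrix ι ι ℝ) (k : ℕ) (b : ι → ℝ) (p : Polynomial ℝ) : Prop :=
  IsPik k p ∧ ∀ q : Polynomial ℝ, IsPik k q →
    euclNorm ((Polynomial.aeval A p).mulVec b) ≤ euclNorm ((Polynomial.aeval A q).mulVec b)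

/-- The Krylov subspace `K_k(A,b) = span{b, Ab, …, A^{k-1}b}`. -/
noncomputable def krylov {ι : Type*} [Fintype ι] [DecidableEq ι]
    (A : Matrix ι ι ℝ) (k : ℕ) (b : ι → ℝ) : Submodule ℝ (ι → ℝ) :=
  Submodule.span ℝ (Set.range fun i : Fin k => (A ^ (i : ℕ)).mulVec b)

/-- `b` satisfies the cross equality for `A` and step `k`. -/
def CrossEq {ι : Type*} [Fintype ι] [DecidableEq ι]
    (A : Matrix ι ι ℝ) (k : ℕ) (b : ι → ℝ) : Prop :=
  ∀ r s : ι → ℝ, IsGmresRes A k b r → IsGmresRes Aᵀ k ((euclNorm r)⁻¹ • r) s →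
    b = (euclNorm s)⁻¹ • s

/-- The Krylov matrix `K(v) = [Av, A²v, …, A^k v]`. -/
noncomputable def Kmat {n : ℕ} (A : Matrix (Fin n) (Fin n) ℝ) (k : ℕ) (v : Fin n → ℝ) :
    Matrix (Fin n) (Fin k) ℝ :=
  Matrix.of fun i j => (A ^ ((j : ℕ) + 1)).mulVec v i

/-- `γ(v) = (K(v)ᵀK(v))⁻¹ K(v)ᵀ v`. -/
noncomputable def gammaVec {n : ℕ} (A : Matrix (Fin n) (Fin n) ℝ) (k : ℕ) (v : Fin n → ℝ) :
    Fin k → ℝ :=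
  ((Kmat A k v)ᵀ * Kmat A k v)⁻¹ *ᵥ ((Kmat A k v)ᵀ *ᵥ v)

/-- `g(v) = min_{c ∈ ℝ^k} ‖v - K(v)c‖²`. -/
noncomputable def gFun {n : ℕ} (A : Matrix (Fin n) (Fin n) ℝ) (k : ℕ) (v : Fin n → ℝ) : ℝ :=
  sInf {s : ℝ | ∃ c : Fin k → ℝ, s = euclNorm (v - Kmat A k v *ᵥ c) ^ 2}

/-- `p(z; c) = 1 - ∑_{j=1}^k c_j z^j`. -/
noncomputable def pPoly {k : ℕ} (c : Fin k → ℝ) : Polynomial ℝ :=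
  1 - ∑ j : Fin k, Polynomial.C (c j) * Polynomial.X ^ ((j : ℕ) + 1)

/-- `f(c,v) = ‖p(A;c)v‖²`. -/
noncomputable def fFun {n k : ℕ} (A : Matrix (Fin n) (Fin n) ℝ) (c : Fin k → ℝ)
    (v : Fin n → ℝ) : ℝ :=
  euclNorm ((Polynomial.aeval A (pPoly c)).mulVec v) ^ 2

/-- `F(c,v) = f(c,v)/(vᵀv)`. -/
noncomputable def FFun {n k : ℕ} (A : Matrix (Fin n) (Fin n) ℝ) (c : Fin k → ℝ)
    (v : Fin n → ℝ) : ℝ :=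
  fFun A c v / edot v v

/-- The Toh matrix `A(ω, ε)`. -/
noncomputable def tohMatrix (ω ε : ℝ) : Matrix (Fin 4) (Fin 4) ℝ :=
  !![1, ε, 0, 0; 0, -1, ω / ε, 0; 0, 0, 1, ε; 0, 0, 0, -1]

/-- `p` is a `k`-th worst-case GMRES polynomial of `A`. -/
def IsWCPoly {ι : Type*} [Fintype ι] [DecidableEq ι]
    (A : Matrix ι ι ℝ) (k : ℕ) (p : Polynomial ℝ) : Prop :=
  IsPik k p ∧ ∃ b : ι → ℝ, euclNorm b = 1 ∧
    (∀ q : Polynomial ℝ, IsPik k q →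
      euclNorm ((Polynomial.aeval A p).mulVec b) ≤ euclNorm ((Polynomial.aeval A q).mulVec b)) ∧
    euclNorm ((Polynomial.aeval A p).mulVec b) = Psi A k

/-- The spectral (Euclidean operator) norm of a real matrix. -/
noncomputable def specNorm {ι : Type*} [Fintype ι] (M : Matrix ι ι ℝ) : ℝ :=
  sSup {r : ℝ | ∃ v : ι → ℝ, euclNorm v = 1 ∧ r = euclNorm (M *ᵥ v)}

/-- The `k`-th ideal GMRES approximation `φ_k(A) = min_{p ∈ π_k} ‖p(A)‖`. -/
noncomputable def phiIdeal {ι : Type*} [Fintype ι] [DecidableEq ι]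
    (A : Matrix ι ι ℝ) (k : ℕ) : ℝ :=
  sInf {r : ℝ | ∃ p : Polynomial ℝ, IsPik k p ∧ r = specNorm (Polynomial.aeval A p)}

/-- Complexification of a real matrix. -/
noncomputable def matC {ι : Type*} (A : Matrix ι ι ℝ) : Matrix ι ι ℂ :=
  A.map fun x => (x : ℂ)

/-- Complexification of a real vector. -/
noncomputable def vecC {ι : Type*} (b : ι → ℝ) : ι → ℂ := fun i => (b i : ℂ)

/-- `Ψ_{k,ℂ,ℝ}(A)`: complex polynomials, real initial vectors. -/
noncomputable def PsiCR {ι : Type*} [Fintype ι] [DecidableEq ι]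
    (A : Matrix ι ι ℝ) (k : ℕ) : ℝ :=
  sSup {r : ℝ | ∃ b : ι → ℝ, euclNorm b = 1 ∧
    r = sInf {s : ℝ | ∃ p : Polynomial ℂ, IsPikC k p ∧
      s = euclNormC ((Polynomial.aeval (matC A) p).mulVec (vecC b))}}

/-- `Ψ_{k,ℂ,ℂ}(A)`: complex polynomials, complex initial vectors. -/
noncomputable def PsiCC {ι : Type*} [Fintype ι] [DecidableEq ι]
    (A : Matrix ι ι ℝ) (k : ℕ) : ℝ :=
  sSup {r : ℝ | ∃ b : ι → ℂ, euclNormC b = 1 ∧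
    r = sInf {s : ℝ | ∃ p : Polynomial ℂ, IsPikC k p ∧
      s = euclNormC ((Polynomial.aeval (matC A) p).mulVec b)}}

/-- `Ψ_{k,ℝ,ℂ}(A)`: real polynomials, complex initial vectors. -/
noncomputable def PsiRC {ι : Type*} [Fintype ι] [DecidableEq ι]
    (A : Matrix ι ι ℝ) (k : ℕ) : ℝ :=
  sSup {r : ℝ | ∃ b : ι → ℂ, euclNormC b = 1 ∧
    r = sInf {s : ℝ | ∃ p : Polynomial ℝ, IsPik k p ∧
      s = euclNormC ((Polynomial.aeval (matC A) (p.map (algebraMap ℝ ℂ))).mulVec b)}}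

/-- `φ_{k,ℝ,ℝ}(A)`. -/
noncomputable def phiRR {ι : Type*} [Fintype ι] [DecidableEq ι]
    (A : Matrix ι ι ℝ) (k : ℕ) : ℝ :=
  sInf {r : ℝ | ∃ p : Polynomial ℝ, IsPik k p ∧
    r = sSup {s : ℝ | ∃ b : ι → ℝ, euclNorm b = 1 ∧
      s = euclNorm ((Polynomial.aeval A p).mulVec b)}}

/-- `φ_{k,ℂ,ℝ}(A)`. -/
noncomputable def phiCR {ι : Type*} [Fintype ι] [DecidableEq ι]
    (A : Matrix ι ι ℝ) (k : ℕ) : ℝ :=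
  sInf {r : ℝ | ∃ p : Polynomial ℂ, IsPikC k p ∧
    r = sSup {s : ℝ | ∃ b : ι → ℝ, euclNorm b = 1 ∧
      s = euclNormC ((Polynomial.aeval (matC A) p).mulVec (vecC b))}}

/-- `φ_{k,ℝ,ℂ}(A)`. -/
noncomputable def phiRC {ι : Type*} [Fintype ι] [DecidableEq ι]
    (A : Matrix ι ι ℝ) (k : ℕ) : ℝ :=
  sInf {r : ℝ | ∃ p : Polynomial ℝ, IsPik k p ∧
    r = sSup {s : ℝ | ∃ b : ι → ℂ, euclNormC b = 1 ∧
      s = euclNormC ((Polynomial.aeval (matC A) (p.map (algebraMap ℝ ℂ))).mulVec b)}}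

/-- `φ_{k,ℂ,ℂ}(A)`. -/
noncomputable def phiCC {ι : Type*} [Fintype ι] [DecidableEq ι]
    (A : Matrix ι ι ℝ) (k : ℕ) : ℝ :=
  sInf {r : ℝ | ∃ p : Polynomial ℂ, IsPikC k p ∧
    r = sSup {s : ℝ | ∃ b : ι → ℂ, euclNormC b = 1 ∧
      s = euclNormC ((Polynomial.aeval (matC A) p).mulVec b)}}

namespace WC

lemma euclNorm_sq {ι : Type*} [Fintype ι] (v : ι → ℝ) : euclNorm v ^ 2 = v ⬝ᵥ v := by
  unfold euclNorm
  rw [Real.sq_sqrt (Finset.sum_nonneg fun i _ => sq_nonneg _)]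
  simp [dotProduct, sq]

lemma euclNorm_nonneg {ι : Type*} [Fintype ι] (v : ι → ℝ) : 0 ≤ euclNorm v :=
  Real.sqrt_nonneg _

lemma euclNorm_le_iff {ι : Type*} [Fintype ι] (u v : ι → ℝ) :
    euclNorm u ≤ euclNorm v ↔ u ⬝ᵥ u ≤ v ⬝ᵥ v := by
  rw [← euclNorm_sq, ← euclNorm_sq, pow_le_pow_iff_left₀ (euclNorm_nonneg _) (euclNorm_nonneg _)]
  norm_num

lemma euclNorm_smul {ι : Type*} [Fintype ι] (a : ℝ) (v : ι → ℝ) :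
    euclNorm (a • v) = |a| * euclNorm v := by
  have h : euclNorm (a • v) ^ 2 = (|a| * euclNorm v) ^ 2 := by
    rw [mul_pow, sq_abs, euclNorm_sq, euclNorm_sq, smul_dotProduct, dotProduct_smul]
    simp only [smul_eq_mul]; ring
  exact (pow_left_inj₀ (euclNorm_nonneg _)
    (mul_nonneg (abs_nonneg _) (euclNorm_nonneg _)) two_ne_zero).1 h

lemma cauchy {ι : Type*} [Fintype ι] (u v : ι → ℝ) :
    u ⬝ᵥ v ≤ euclNorm u * euclNorm v := by
  apply le_of_sq_le_sq _ (mul_nonneg (euclNorm_nonneg _) (euclNorm_nonneg _)) |> fun h => h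
  rw [mul_pow]
  unfold euclNorm
  rw [Real.sq_sqrt (Finset.sum_nonneg fun i _ => sq_nonneg _),
    Real.sq_sqrt (Finset.sum_nonneg fun i _ => sq_nonneg _)]
  exact Finset.sum_mul_sq_le_sq_mul_sq _ _ _

variable {n : ℕ} (A : Matrix (Fin n) (Fin n) ℝ)

lemma pPoly_mulVec (k : ℕ) (c : Fin k → ℝ) (v : Fin n → ℝ) :
    (aeval A (pPoly c)) *ᵥ v = v - Kmat A k v *ᵥ c := by
  unfold pPoly
  have h : Kmat A k v *ᵥ c = ∑ j : Fin k, c j • ((A ^ ((j : ℕ) + 1)) *ᵥ v) := by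
    ext i
    simp [Kmat, mulVec, dotProduct, mul_comm]
  rw [h]
  simp only [map_sub, map_one, map_sum, map_mul, aeval_C, map_pow, aeval_X, Matrix.sub_mulVec,
    Matrix.one_mulVec, Matrix.sum_mulVec]
  congr 1
  refine Finset.sum_congr rfl fun j _ => ?_
  rw [← Algebra.smul_def, Matrix.smul_mulVec]

lemma isPik_pPoly {k : ℕ} (c : Fin k → ℝ) : IsPik k (pPoly c) := by
  constructor
  · unfold pPoly
    refine (natDegree_sub_le _ _).trans (max_le (by simp) ?_)
    refine natDegree_sum_le_of_forall_le _ _ fun j _ => ?_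
    exact (natDegree_C_mul_X_pow_le _ _).trans j.2
  · simp [pPoly, eval_finset_sum]

lemma exists_pPoly {k : ℕ} {p : ℝ[X]} (hp : IsPik k p) : ∃ c : Fin k → ℝ, p = pPoly c := by
  refine ⟨fun j => - p.coeff (j + 1), ?_⟩
  unfold pPoly
  conv_lhs => rw [p.as_sum_range_C_mul_X_pow' (Nat.lt_succ_of_le hp.1)]
  rw [Finset.sum_range_succ', coeff_zero_eq_eval_zero, hp.2, Finset.sum_range]
  simp [add_comm]

lemma orth {k : ℕ} {b : Fin n → ℝ} {p : ℝ[X]} (hp : IsGmresPoly A k b p) {q : ℝ[X]}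
    (hq : IsPik k q) :
    (aeval A p *ᵥ b) ⬝ᵥ (aeval A q *ᵥ b) = (aeval A p *ᵥ b) ⬝ᵥ (aeval A p *ᵥ b) := by
  set r := aeval A p *ᵥ b with hr
  set d := aeval A q *ᵥ b - r with hd
  have key : ∀ t : ℝ, 0 ≤ 2 * t * (r ⬝ᵥ d) + t ^ 2 * (d ⬝ᵥ d) := by
    intro t
    have hpik : IsPik k (p + C t * (q - p)) := by
      constructor
      · refine (natDegree_add_le _ _).trans (max_le hp.1.1 ?_)
        refine (natDegree_C_mul_le _ _).trans ((natDegree_sub_le _ _).trans (max_le hq.1 hp.1.1))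
      · simp [hp.1.2, hq.2]
    have h := (euclNorm_le_iff _ _).1 (hp.2 _ hpik)
    have e : aeval A (p + C t * (q - p)) *ᵥ b = r + t • d := by
      rw [map_add, map_mul, aeval_C, ← Algebra.smul_def, Matrix.add_mulVec, Matrix.smul_mulVec,
        map_sub, Matrix.sub_mulVec]
    rw [e, ← hr] at h
    simp only [add_dotProduct, dotProduct_add, smul_dotProduct, dotProduct_smul, smul_eq_mul,
      dotProduct_comm d r] at h
    linarith
  have hz : r ⬝ᵥ d = 0 := by
    set x := r ⬝ᵥ d
    set y := d ⬝ᵥ d with hy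
    have hy0 : 0 ≤ y := by rw [hy, ← euclNorm_sq]; positivity
    have h := key (-x / (y + 1))
    have h2 : 2 * (-x / (y + 1)) * x + (-x / (y + 1)) ^ 2 * y = -(x ^ 2 * (y + 2)) / (y+1)^2 := by
      field_simp; ring
    rw [h2, le_div_iff₀ (by positivity)] at h
    nlinarith [sq_nonneg x]
  rw [hd, dotProduct_sub] at hz
  linarith

/-- normal equations imply the GMRES minimality -/
lemma gmres_of_normal {k : ℕ} {v : Fin n → ℝ} {c : Fin k → ℝ}
    (h : (Kmat A k v)ᵀ *ᵥ (v - Kmat A k v *ᵥ c) = 0) : IsGmresPoly A k v (pPoly c) := by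
  refine ⟨isPik_pPoly c, fun q hq => ?_⟩
  obtain ⟨c', rfl⟩ := exists_pPoly hq
  rw [euclNorm_le_iff, pPoly_mulVec, pPoly_mulVec]
  set s := v - Kmat A k v *ᵥ c with hs
  have e : v - Kmat A k v *ᵥ c' = s + Kmat A k v *ᵥ (c - c') := by
    rw [hs, Matrix.mulVec_sub]; abel
  have ho : s ⬝ᵥ (Kmat A k v *ᵥ (c - c')) = 0 := by
    rw [Matrix.dotProduct_mulVec, ← Matrix.mulVec_transpose, h, zero_dotProduct]
  rw [e]
  simp only [add_dotProduct, dotProduct_add, ho, dotProduct_comm _ s]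
  have : 0 ≤ (Kmat A k v *ᵥ (c - c')) ⬝ᵥ (Kmat A k v *ᵥ (c - c')) := by
    rw [← euclNorm_sq]; positivity
  linarith

lemma normal_of_gmres {k : ℕ} {v : Fin n → ℝ} {c : Fin k → ℝ}
    (h : IsGmresPoly A k v (pPoly c)) : (Kmat A k v)ᵀ *ᵥ (v - Kmat A k v *ᵥ c) = 0 := by
  set s := v - Kmat A k v *ᵥ c with hs
  set w := (Kmat A k v)ᵀ *ᵥ s with hw
  have h1 := orth A h (isPik_pPoly (c - w))
  rw [pPoly_mulVec, pPoly_mulVec, ← hs] at h1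
  have e : v - Kmat A k v *ᵥ (c - w) = s + Kmat A k v *ᵥ w := by
    rw [hs, Matrix.mulVec_sub]; abel
  rw [e, dotProduct_add, Matrix.dotProduct_mulVec, ← Matrix.mulVec_transpose, ← hw] at h1
  exact dotProduct_self_eq_zero.1 (by linarith)

lemma det_ne_zero {k : ℕ} (hA : IsUnit A) {b : Fin n → ℝ} {p : ℝ[X]} (hp : IsGmresPoly A k b p)
    (hr : aeval A p *ᵥ b ≠ 0) : ((Kmat A k b)ᵀ * Kmat A k b).det ≠ 0 := by
  intro hdet
  obtain ⟨c, hc0, hc⟩ := Matrix.exists_mulVec_eq_zero_iff.2 hdet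
  have hK : Kmat A k b *ᵥ c = 0 := by
    apply dotProduct_self_eq_zero.1
    rw [Matrix.dotProduct_mulVec, ← Matrix.mulVec_transpose, Matrix.mulVec_mulVec, hc,
      zero_dotProduct]
  set s : ℝ[X] := 1 - pPoly c with hs
  have hsA : aeval A s *ᵥ b = 0 := by
    rw [hs, map_sub, map_one, Matrix.sub_mulVec, Matrix.one_mulVec, pPoly_mulVec, hK]; simp
  have hs0 : s ≠ 0 := by
    intro h0
    apply hc0
    ext j
    have := congrArg (fun f => coeff f ((j : ℕ) + 1)) h0
    simpa [hs, pPoly, finset_sum_coeff, coeff_C_mul, coeff_X_pow, Fin.val_inj] using this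
  have hsd : s.natDegree ≤ k :=
    (natDegree_sub_le _ _).trans (max_le (by simp) (isPik_pPoly c).1)
  obtain ⟨u, hu, hnd⟩ := exists_eq_pow_rootMultiplicity_mul_and_not_dvd s hs0 0
  rw [map_zero, sub_zero] at hu hnd
  set m := rootMultiplicity 0 s
  have hu0 : u.eval 0 ≠ 0 := by
    rw [X_dvd_iff, coeff_zero_eq_eval_zero] at hnd; exact hnd
  have hune : u ≠ 0 := by rintro rfl; simp at hu0
  have hud : u.natDegree ≤ k := by
    have := natDegree_mul (p := (X : ℝ[X]) ^ m) (q := u) (pow_ne_zero _ X_ne_zero) hune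
    rw [← hu] at this; omega
  have huA : aeval A u *ᵥ b = 0 := by
    rw [hu, map_mul, map_pow, aeval_X, ← Matrix.mulVec_mulVec] at hsA
    have hinj := Matrix.mulVec_injective_of_isUnit (hA.pow m)
    exact hinj (by rw [hsA, Matrix.mulVec_zero])
  have hq : IsPik k (C (u.eval 0)⁻¹ * u) :=
    ⟨(natDegree_C_mul_le _ _).trans hud, by simp [hu0]⟩
  have h := (euclNorm_le_iff _ _).1 (hp.2 _ hq)
  rw [map_mul, aeval_C, ← Algebra.smul_def, Matrix.smul_mulVec, huA, smul_zero,
    zero_dotProduct] at h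
  apply hr
  apply dotProduct_self_eq_zero.1
  apply le_antisymm h
  rw [← euclNorm_sq]; positivity

lemma gmres_le_Psi {k : ℕ} {v : Fin n → ℝ} {p : ℝ[X]} (hp : IsGmresPoly A k v p) :
    euclNorm (aeval A p *ᵥ v) ≤ Psi A k * euclNorm v := by
  rcases eq_or_ne (euclNorm v) 0 with h0 | h0
  · have hv : v = 0 := by
      apply dotProduct_self_eq_zero.1; rw [← euclNorm_sq, h0]; norm_num
    subst hv
    rw [Matrix.mulVec_zero, h0, mul_zero]
  have hpos : 0 < euclNorm v := lt_of_le_of_ne (euclNorm_nonneg _) (Ne.symm h0)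
  set u := (euclNorm v)⁻¹ • v with hu
  have hu1 : euclNorm u = 1 := by
    rw [hu, euclNorm_smul, abs_of_pos (inv_pos.2 hpos), inv_mul_cancel₀ h0]
  have hbdd : BddBelow {s : ℝ | ∃ p : ℝ[X], IsPik k p ∧ s = euclNorm (aeval A p *ᵥ u)} :=
    ⟨0, by rintro _ ⟨p, -, rfl⟩; exact euclNorm_nonneg _⟩
  have h1 : gmresVal A k u ≤ Psi A k := by
    refine le_csSup ⟨1, ?_⟩ ⟨u, hu1, rfl⟩
    rintro _ ⟨w, hw, rfl⟩
    refine csInf_le ⟨0, by rintro _ ⟨p, -, rfl⟩; exact euclNorm_nonneg _⟩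
      ⟨1, ⟨by simp, by simp⟩, by simp [hw]⟩
  have h2 : (euclNorm v)⁻¹ * euclNorm (aeval A p *ᵥ v) ≤ gmresVal A k u := by
    refine le_csInf ⟨_, p, hp.1, rfl⟩ ?_
    rintro _ ⟨q, hq, rfl⟩
    rw [hu, Matrix.mulVec_smul, euclNorm_smul, abs_of_pos (inv_pos.2 hpos)]
    exact mul_le_mul_of_nonneg_left (hp.2 q hq) (inv_pos.2 hpos).le
  have h3 := h2.trans h1
  rwa [inv_mul_le_iff₀ hpos, mul_comm] at h3

lemma continuous_Kmat (k : ℕ) : Continuous fun v : Fin n → ℝ => Kmat A k v := by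
  unfold Kmat
  refine continuous_matrix fun i j => ?_
  simp only [Matrix.of_apply]
  exact (continuous_apply i).comp (Continuous.matrix_mulVec continuous_const continuous_id)

lemma continuousAt_gammaVec (k : ℕ) {b : Fin n → ℝ}
    (hd : ((Kmat A k b)ᵀ * Kmat A k b).det ≠ 0) :
    ContinuousAt (fun v : Fin n → ℝ => gammaVec A k v) b := by
  have hK := continuous_Kmat A k
  have hG : Continuous fun v : Fin n → ℝ => (Kmat A k v)ᵀ * Kmat A k v :=
    hK.matrix_transpose.matrix_mul hK
  have hw : Continuous fun v : Fin n → ℝ =>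
      ((Kmat A k v)ᵀ * Kmat A k v).adjugate *ᵥ ((Kmat A k v)ᵀ *ᵥ v) :=
    hG.matrix_adjugate.matrix_mulVec (hK.matrix_transpose.matrix_mulVec continuous_id)
  unfold gammaVec
  simp only [Matrix.inv_def, Ring.inverse_eq_inv', Matrix.smul_mulVec]
  exact (hG.matrix_det.continuousAt.inv₀ hd).smul hw.continuousAt

lemma gammaVec_normal {k : ℕ} {v : Fin n → ℝ}
    (hd : ((Kmat A k v)ᵀ * Kmat A k v).det ≠ 0) :
    (Kmat A k v)ᵀ *ᵥ (v - Kmat A k v *ᵥ gammaVec A k v) = 0 := by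
  unfold gammaVec
  rw [Matrix.mulVec_sub, Matrix.mulVec_mulVec, Matrix.mulVec_mulVec,
    Matrix.mul_nonsing_inv _ (isUnit_iff_ne_zero.2 hd), Matrix.one_mulVec, sub_self]

lemma gammaVec_unique {k : ℕ} {v : Fin n → ℝ} {c : Fin k → ℝ}
    (hd : ((Kmat A k v)ᵀ * Kmat A k v).det ≠ 0)
    (h : (Kmat A k v)ᵀ *ᵥ (v - Kmat A k v *ᵥ c) = 0) : gammaVec A k v = c := by
  rw [Matrix.mulVec_sub, Matrix.mulVec_mulVec, sub_eq_zero] at h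
  unfold gammaVec
  rw [h, Matrix.mulVec_mulVec, Matrix.nonsing_inv_mul _ (isUnit_iff_ne_zero.2 hd),
    Matrix.one_mulVec]

lemma first_order {k : ℕ} (hA : IsUnit A) {b : Fin n → ℝ} (hb : euclNorm b = 1)
    {p : ℝ[X]} (hp : IsGmresPoly A k b p)
    (hwc : euclNorm (aeval A p *ᵥ b) = Psi A k) (hr : aeval A p *ᵥ b ≠ 0) (h : Fin n → ℝ) :
    (aeval A p *ᵥ b) ⬝ᵥ (aeval A p *ᵥ h) ≤ Psi A k ^ 2 * (b ⬝ᵥ h) := by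
  have hd := det_ne_zero A hA hp hr
  obtain ⟨c, rfl⟩ := exists_pPoly hp.1
  have hc := gammaVec_unique A hd (normal_of_gmres A hp)
  let V : ℝ → Fin n → ℝ := fun t => b + t • h
  have hV : Continuous V := by fun_prop
  have hV0 : V 0 = b := by simp [V]
  let g : ℝ → Fin k → ℝ := fun t => gammaVec A k (V t)
  have hg : ContinuousAt g 0 := by
    refine ContinuousAt.comp (g := fun v => gammaVec A k v) (f := V) ?_ hV.continuousAt
    rw [hV0]; exact continuousAt_gammaVec A k hd
  have hg0 : g 0 = c := by simp only [g, hV0, hc]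
  let R : ℝ → Fin n → ℝ := fun t => b - Kmat A k b *ᵥ g t
  let H : ℝ → Fin n → ℝ := fun t => h - Kmat A k h *ᵥ g t
  have hcont : ∀ M : Matrix (Fin n) (Fin k) ℝ, ∀ x, ContinuousAt (fun t => x - M *ᵥ g t) 0 := by
    intro M x
    have : Continuous fun y : Fin k → ℝ => x - M *ᵥ y :=
      continuous_const.sub (continuous_const.matrix_mulVec continuous_id)
    exact ContinuousAt.comp (g := fun y => x - M *ᵥ y) this.continuousAt hg
  have hR : ContinuousAt R 0 := hcont _ _
  have hH : ContinuousAt H 0 := hcont _ _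
  have hdot : ∀ f1 f2 : ℝ → Fin n → ℝ, ContinuousAt f1 0 → ContinuousAt f2 0 →
      ContinuousAt (fun t => f1 t ⬝ᵥ f2 t) 0 := by
    intro f1 f2 h1 h2
    have : Continuous fun y : (Fin n → ℝ) × (Fin n → ℝ) => y.1 ⬝ᵥ y.2 :=
      continuous_fst.dotProduct continuous_snd
    exact ContinuousAt.comp (g := fun y : (Fin n → ℝ) × (Fin n → ℝ) => y.1 ⬝ᵥ y.2)
      this.continuousAt (h1.prodMk h2)
  have hL : ContinuousAt (fun t => 2 * (R t ⬝ᵥ H t) + t * (H t ⬝ᵥ H t)) 0 :=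
    (continuousAt_const.mul (hdot _ _ hR hH)).add (continuousAt_id.mul (hdot _ _ hH hH))
  have hRt : ContinuousAt (fun t : ℝ => Psi A k ^ 2 * (2 * (b ⬝ᵥ h) + t * (h ⬝ᵥ h))) 0 := by
    fun_prop
  have hev : ∀ᶠ t in nhds (0 : ℝ), ((Kmat A k (V t))ᵀ * Kmat A k (V t)).det ≠ 0 := by
    have hK := (continuous_Kmat A k).comp hV
    have : Continuous fun t => ((Kmat A k (V t))ᵀ * Kmat A k (V t)).det :=
      (hK.matrix_transpose.matrix_mul hK).matrix_det
    exact this.continuousAt.eventually_ne (by rw [hV0]; exact hd)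
  have hineq : ∀ᶠ t in nhdsWithin (0 : ℝ) (Set.Ioi 0),
      2 * (R t ⬝ᵥ H t) + t * (H t ⬝ᵥ H t) ≤ Psi A k ^ 2 * (2 * (b ⬝ᵥ h) + t * (h ⬝ᵥ h)) := by
    filter_upwards [hev.filter_mono nhdsWithin_le_nhds, self_mem_nhdsWithin] with t ht htpos
    have htpos : 0 < t := htpos
    have hgm := gmres_of_normal A (gammaVec_normal A ht)
    have hle := gmres_le_Psi A hgm
    have hle2 := pow_le_pow_left₀ (euclNorm_nonneg _) hle 2
    have hlow := pow_le_pow_left₀ (euclNorm_nonneg _) (hp.2 _ hgm.1) 2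
    rw [hwc] at hlow
    have e1 : aeval A (pPoly (gammaVec A k (V t))) *ᵥ b = R t := pPoly_mulVec A k _ _
    have e2 : aeval A (pPoly (gammaVec A k (V t))) *ᵥ h = H t := pPoly_mulVec A k _ _
    have e3 : aeval A (pPoly (gammaVec A k (V t))) *ᵥ V t = R t + t • H t := by
      rw [← e1, ← e2, ← Matrix.mulVec_smul, ← Matrix.mulVec_add]
    have e4 : b ⬝ᵥ b = 1 := by rw [← euclNorm_sq, hb]; norm_num
    rw [e3, mul_pow, euclNorm_sq, euclNorm_sq] at hle2
    rw [e1, euclNorm_sq] at hlow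
    simp only [V, add_dotProduct, dotProduct_add, smul_dotProduct, dotProduct_smul, smul_eq_mul,
      dotProduct_comm (H t) (R t), dotProduct_comm h b, e4] at hle2
    refine le_of_mul_le_mul_left ?_ htpos
    linarith
  have hlim := le_of_tendsto_of_tendsto (hL.tendsto.mono_left nhdsWithin_le_nhds)
    (hRt.tendsto.mono_left nhdsWithin_le_nhds) hineq
  have eR : R 0 = aeval A (pPoly c) *ᵥ b := by simp only [R, hg0]; exact (pPoly_mulVec A k _ _).symm
  have eH : H 0 = aeval A (pPoly c) *ᵥ h := by simp only [H, hg0]; exact (pPoly_mulVec A k _ _).symm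
  rw [eR, eH] at hlim
  linarith

lemma aeval_transpose (p : ℝ[X]) : aeval Aᵀ p = (aeval A p)ᵀ := by
  rw [aeval_eq_sum_range, aeval_eq_sum_range, Matrix.transpose_sum]
  simp [Matrix.transpose_pow]

end WC

/-- If `b` is a unit norm `k`-th worst-case GMRES initial vector with
worst-case GMRES polynomial `p_k` and residual `r = p_k(A)b`, then `p_k` is also the
`k`-th GMRES polynomial of `Aᵀ` and `r/‖r‖`, and `p_k(Aᵀ)p_k(A)b = Ψ_k(A)² b`. -/
theorem worst_case_polynomial_transpose {n : ℕ} (A : Matrix (Fin n) (Fin n) ℝ)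
    (hA : IsUnit A) (k : ℕ) (hk1 : 1 ≤ k) (hk2 : k ≤ dA A - 1)
    (b : Fin n → ℝ) (hb : euclNorm b = 1)
    (pk : Polynomial ℝ) (hpk : IsGmresPoly A k b pk)
    (hwc : euclNorm ((Polynomial.aeval A pk).mulVec b) = Psi A k)
    (r : Fin n → ℝ) (hr : r = (Polynomial.aeval A pk).mulVec b) :
    IsGmresPoly Aᵀ k ((euclNorm r)⁻¹ • r) pk ∧
    (Polynomial.aeval Aᵀ pk).mulVec ((Polynomial.aeval A pk).mulVec b)
      = (Psi A k ^ 2) • b := by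
  subst hr
  set r := (Polynomial.aeval A pk).mulVec b with hr
  rcases eq_or_ne r 0 with h0 | h0
  · refine ⟨⟨hpk.1, fun q _ => ?_⟩, ?_⟩
    · simp [h0]
    · rw [← hwc, h0]
      simp [euclNorm]
  have hT : Polynomial.aeval Aᵀ pk *ᵥ r = (Psi A k ^ 2) • b := by
    set w := Polynomial.aeval Aᵀ pk *ᵥ r - (Psi A k ^ 2) • b with hw
    have h1 := WC.first_order A hA hb hpk hwc h0 w
    rw [← hr, Matrix.dotProduct_mulVec, ← Matrix.mulVec_transpose, ← WC.aeval_transpose] at h1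
    have h2 : w ⬝ᵥ w ≤ 0 := by
      conv_lhs => rw [hw, sub_dotProduct, smul_dotProduct, smul_eq_mul]
      linarith
    have h3 : w = 0 := by
      apply dotProduct_self_eq_zero.1
      apply le_antisymm h2
      rw [← WC.euclNorm_sq]; positivity
    exact sub_eq_zero.1 h3
  refine ⟨⟨hpk.1, fun q hq => ?_⟩, hT⟩
  rw [Matrix.mulVec_smul, Matrix.mulVec_smul, WC.euclNorm_smul, WC.euclNorm_smul]
  refine mul_le_mul_of_nonneg_left ?_ (abs_nonneg _)
  rw [hT, WC.euclNorm_smul, hb, mul_one, abs_of_nonneg (sq_nonneg _), ← hwc, WC.euclNorm_sq,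
    ← WC.orth A hpk hq, Matrix.dotProduct_mulVec, ← Matrix.mulVec_transpose,
    ← WC.aeval_transpose]
  have := WC.cauchy (Polynomial.aeval Aᵀ q *ᵥ r) b
  rwa [hb, mul_one] at this
end

section
/- Let A ∈ ℝ^{n×n} be nonsingular and 1 ≤ k < d(A). If (c̃, ṽ) ∈ ℝ^k × ℝ^n with ‖ṽ‖ = 1 and d(A, ṽ) ≥ k solves the worst-case GMRES problem max_{‖v‖=1} min_{c ∈ ℝ^k} f(c, v), then (c̃, ṽ) is a stationary point of the function F(c, v) = f(c, v)/(vᵀv): both the partial derivative of F with respect to c and the partial derivative of F with respect to v vanish at (c̃, ṽ). -/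
open Polynomial Matrix

open scoped InnerProductSpace in
theorem core_aux {W E : Type*} [NormedAddCommGroup W] [NormedSpace ℝ W]
    [NormedAddCommGroup E] [InnerProductSpace ℝ E] (T S : W →L[ℝ] E) (x y : E) (α β m : ℝ)
    (hm : 0 < m) (hT : ∀ e, m * ‖e‖ ≤ ‖T e‖) (hx : ∀ e, ⟪x, T e⟫_ℝ = 0)
    (h : ∀ t : ℝ, ∃ e, ‖x + t • y - (T e + t • S e)‖ ^ 2 ≤ ‖x‖ ^ 2 * (1 + 2 * t * α + t ^ 2 * β)) :
    ⟪x, y⟫_ℝ = ‖x‖ ^ 2 * α := by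
  set C : ℝ := ‖x‖ * ‖S‖ + ‖y‖ * ‖T‖ + ‖y‖ * ‖S‖ with hC
  set L : ℝ := ⟪x, y⟫_ℝ - ‖x‖ ^ 2 * α with hL
  set D : ℝ := 4 * C ^ 2 / m ^ 2 - (‖y‖ ^ 2 - ‖x‖ ^ 2 * β) with hD
  have hC0 : 0 ≤ C := by positivity
  have key : ∀ t : ℝ, |t| ≤ 1 → |t| * (2 * ‖S‖) ≤ m → 2 * t * L - D * t ^ 2 ≤ 0 := by
    intro t ht1 ht2
    obtain ⟨e, he⟩ := h t
    have hlow : m / 2 * ‖e‖ ≤ ‖T e + t • S e‖ := by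
      have h1 : ‖T e‖ ≤ ‖T e + t • S e‖ + ‖t • S e‖ := by
        simpa using norm_sub_le (T e + t • S e) (t • S e)
      have h2 : ‖t • S e‖ ≤ |t| * (‖S‖ * ‖e‖) := by
        rw [norm_smul, Real.norm_eq_abs]
        gcongr
        exact S.le_opNorm e
      have h3 := hT e
      nlinarith [norm_nonneg e]
    have hcross : ⟪x + t • y, T e + t • S e⟫_ℝ ≤ C * |t| * ‖e‖ := by
      have e1 : ⟪x + t • y, T e + t • S e⟫_ℝ
          = t * ⟪x, S e⟫_ℝ + t * ⟪y, T e⟫_ℝ + t * (t * ⟪y, S e⟫_ℝ) := by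
        simp only [inner_add_left, inner_add_right, real_inner_smul_left, real_inner_smul_right, hx]
        ring
      have b : ∀ (z : E) (R : W →L[ℝ] E), |⟪z, R e⟫_ℝ| ≤ ‖z‖ * ‖R‖ * ‖e‖ := by
        intro z R
        calc _ ≤ ‖z‖ * ‖R e‖ := abs_real_inner_le_norm _ _
          _ ≤ ‖z‖ * (‖R‖ * ‖e‖) := by gcongr; exact R.le_opNorm e
          _ = _ := by ring
      have b' : ∀ (z : E) (R : W →L[ℝ] E), t * ⟪z, R e⟫_ℝ ≤ |t| * (‖z‖ * ‖R‖ * ‖e‖) := by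
        intro z R
        calc _ ≤ |t * ⟪z, R e⟫_ℝ| := le_abs_self _
          _ = |t| * |⟪z, R e⟫_ℝ| := abs_mul _ _
          _ ≤ _ := by gcongr; exact b z R
      have b3 : t * (t * ⟪y, S e⟫_ℝ) ≤ |t| * (‖y‖ * ‖S‖ * ‖e‖) := by
        calc _ ≤ |t * (t * ⟪y, S e⟫_ℝ)| := le_abs_self _
          _ = |t| * (|t| * |⟪y, S e⟫_ℝ|) := by rw [abs_mul, abs_mul]
          _ ≤ |t| * (1 * (‖y‖ * ‖S‖ * ‖e‖)) := by gcongr; exact b y S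
          _ = _ := by ring
      rw [e1, hC]
      nlinarith [b' x S, b' y T, b3]
    have hexp : ‖x + t • y - (T e + t • S e)‖ ^ 2 = ‖x‖ ^ 2 + 2 * t * ⟪x, y⟫_ℝ + t ^ 2 * ‖y‖ ^ 2
        - 2 * ⟪x + t • y, T e + t • S e⟫_ℝ + ‖T e + t • S e‖ ^ 2 := by
      rw [norm_sub_sq_real, norm_add_sq_real, real_inner_smul_right, norm_smul, mul_pow,
        Real.norm_eq_abs, sq_abs]
      ring
    have hsq : (m / 2 * ‖e‖) ^ 2 ≤ ‖T e + t • S e‖ ^ 2 := by gcongr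
    have hyoung : 2 * (C * |t| * ‖e‖) - (m / 2 * ‖e‖) ^ 2 ≤ 4 * C ^ 2 / m ^ 2 * t ^ 2 := by
      have : 0 ≤ (2 * C * |t| / m - m / 2 * ‖e‖) ^ 2 := sq_nonneg _
      have e2 : (2 * C * |t| / m - m / 2 * ‖e‖) ^ 2 = 4 * C ^ 2 / m ^ 2 * |t| ^ 2
        - 2 * (C * |t| * ‖e‖) + (m / 2 * ‖e‖) ^ 2 := by
        field_simp
        ring
      rw [sq_abs] at e2
      linarith
    rw [hexp] at he
    rw [hL, hD]
    nlinarith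
  have hloc : IsLocalMax (fun t : ℝ => 2 * t * L - D * t ^ 2) 0 := by
    have c1 : Filter.Tendsto (fun t : ℝ => |t|) (nhds 0) (nhds 0) := by
      simpa using (continuous_abs (G := ℝ)).tendsto 0
    have c2 : Filter.Tendsto (fun t : ℝ => |t| * (2 * ‖S‖)) (nhds 0) (nhds 0) := by
      simpa using c1.mul_const (2 * ‖S‖)
    filter_upwards [c1.eventually (gt_mem_nhds one_pos), c2.eventually (gt_mem_nhds hm)] with t h1 h2
    simpa using key t h1.le h2.le
  have hder : HasDerivAt (fun t : ℝ => 2 * t * L - D * t ^ 2) (2 * L) 0 := by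
    have := ((((hasDerivAt_id' (0:ℝ)).const_mul 2).mul_const L).sub
      (((hasDerivAt_id' (0:ℝ)).pow 2).const_mul D))
    exact this.congr_deriv (by simp)
  have := hloc.hasDerivAt_eq_zero hder
  linarith

theorem euclNorm_sq {ι : Type*} [Fintype ι] (v : ι → ℝ) :
    euclNorm v ^ 2 = ‖WithLp.toLp 2 v‖ ^ 2 := by
  rw [EuclideanSpace.norm_sq_eq, euclNorm, Real.sq_sqrt (by positivity)]
  simp

theorem euclNorm_eq {ι : Type*} [Fintype ι] (v : ι → ℝ) :
    euclNorm v = ‖WithLp.toLp 2 v‖ := by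
  rw [EuclideanSpace.norm_eq, euclNorm]
  simp

theorem edot_eq {ι : Type*} [Fintype ι] (v : ι → ℝ) :
    edot v v = ‖WithLp.toLp 2 v‖ ^ 2 := by
  rw [EuclideanSpace.norm_sq_eq, edot]
  simp [sq]

/-- `q(z; e) = ∑ e_j z^j`, linear in `e`. -/
noncomputable def qLin (k : ℕ) : (Fin k → ℝ) →ₗ[ℝ] Polynomial ℝ where
  toFun e := ∑ j : Fin k, Polynomial.C (e j) * Polynomial.X ^ ((j : ℕ) + 1)
  map_add' a b := by simp [add_mul, Finset.sum_add_distrib]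
  map_smul' r a := by simp [Finset.smul_sum, Polynomial.smul_eq_C_mul, mul_assoc]

theorem pPoly_add {k : ℕ} (c e : Fin k → ℝ) : pPoly (c + e) = pPoly c - qLin k e := by
  have h : ∀ c : Fin k → ℝ, pPoly c = 1 - qLin k c := fun c => rfl
  rw [h, h, map_add]; ring

/-- `e ↦ q(A; e) u`. -/
noncomputable def KL {n : ℕ} (A : Matrix (Fin n) (Fin n) ℝ) (k : ℕ) (u : Fin n → ℝ) :
    (Fin k → ℝ) →ₗ[ℝ] EuclideanSpace ℝ (Fin n) where
  toFun e := WithLp.toLp 2 ((Polynomial.aeval A (qLin k e)).mulVec u)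
  map_add' a b := by simp [Matrix.add_mulVec]
  map_smul' r a := by simp [Matrix.smul_mulVec]

theorem KL_inj {n : ℕ} (A : Matrix (Fin n) (Fin n) ℝ) (hA : IsUnit A) (k : ℕ)
    (u : Fin n → ℝ) (hd : k ≤ dAb A u) : LinearMap.ker (KL A k u) = ⊥ := by
  rw [LinearMap.ker_eq_bot']
  intro e he
  have he1 : (Polynomial.aeval A (qLin k e)).mulVec u = 0 := by
    have := congrArg WithLp.ofLp he
    simpa [KL] using this
  set q' : Polynomial ℝ := ∑ j : Fin k, Polynomial.C (e j) * Polynomial.X ^ (j : ℕ) with hq'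
  have hq : qLin k e = Polynomial.X * q' := by
    simp only [qLin, LinearMap.coe_mk, AddHom.coe_mk, hq', Finset.mul_sum]
    refine Finset.sum_congr rfl fun j _ => ?_
    ring
  have he2 : (Polynomial.aeval A q').mulVec u = 0 := by
    rw [hq, map_mul, Polynomial.aeval_X, ← Matrix.mulVec_mulVec] at he1
    exact (Matrix.mulVec_injective_iff_isUnit.2 hA) (by rw [he1, Matrix.mulVec_zero])
  have hdeg : q'.degree < k := by
    rw [hq']
    refine (Polynomial.degree_sum_le _ _).trans_lt ?_
    rw [Finset.sup_lt_iff (by exact_mod_cast WithBot.bot_lt_coe k)]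
    intro j _
    refine (Polynomial.degree_C_mul_X_pow_le _ _).trans_lt ?_
    exact_mod_cast j.2
  have hz : q' = 0 := by
    by_contra hne
    have h1 : dAb A u ≤ q'.natDegree := Nat.sInf_le ⟨q', hne, rfl, he2⟩
    have h2 := (Polynomial.natDegree_lt_iff_degree_lt hne).2 hdeg
    omega
  funext j
  have := congrArg (fun p => Polynomial.coeff p (j : ℕ)) hz
  simpa [hq', Polynomial.finsetSum_coeff, Polynomial.coeff_X_pow, Fin.val_inj] using this

/-- If `(c̃, ṽ)` with `‖ṽ‖ = 1` and `d(A,ṽ) ≥ k` solves the worst-case GMRES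
problem `max_{‖v‖=1} min_c f(c,v)`, then `(c̃, ṽ)` is a stationary point of
`F(c,v) = f(c,v)/(vᵀv)`: both partial derivatives of `F` vanish at `(c̃, ṽ)`. -/
theorem worst_case_stationary_point {n : ℕ} (A : Matrix (Fin n) (Fin n) ℝ)
    (hA : IsUnit A) (k : ℕ) (hk1 : 1 ≤ k) (hk2 : k < dA A)
    (ct : Fin k → ℝ) (vt : Fin n → ℝ) (hvt : euclNorm vt = 1) (hd : k ≤ dAb A vt)
    (hmin : ∀ c : Fin k → ℝ, fFun A ct vt ≤ fFun A c vt)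
    (hmax : ∀ v : Fin n → ℝ, euclNorm v = 1 → ∃ c : Fin k → ℝ, fFun A c v ≤ fFun A ct vt) :
    fderiv ℝ (fun c : Fin k → ℝ => FFun A c vt) ct = 0 ∧
    fderiv ℝ (fun v : Fin n → ℝ => FFun A ct v) vt = 0 := by
  have hv1 : ‖WithLp.toLp 2 vt‖ = 1 := by rw [← euclNorm_eq]; exact hvt
  have hf : ∀ (e : Fin k → ℝ) (v : Fin n → ℝ), fFun A (ct + e) v
      = ‖WithLp.toLp 2 ((Polynomial.aeval A (pPoly ct)).mulVec v) - KL A k v e‖ ^ 2 := by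
    intro e v
    rw [fFun, euclNorm_sq, pPoly_add, map_sub, Matrix.sub_mulVec]
    rfl
  have hf0 : ∀ v : Fin n → ℝ, fFun A ct v
      = ‖WithLp.toLp 2 ((Polynomial.aeval A (pPoly ct)).mulVec v)‖ ^ 2 := by
    intro v
    rw [fFun, euclNorm_sq]
  constructor
  · apply IsLocalMin.fderiv_eq_zero
    refine Filter.Eventually.of_forall fun c => ?_
    simp only [FFun]
    have := hmin c
    have h0 : 0 ≤ edot vt vt := by rw [edot_eq]; positivity
    gcongr
  set P := Polynomial.aeval A (pPoly ct) with hP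
  obtain ⟨m, hm, hT⟩ : ∃ m : ℝ, 0 < m ∧ ∀ e, m * ‖e‖ ≤ ‖KL A k vt e‖ := by
    obtain ⟨K, hK, hanti⟩ := (KL A k vt).exists_antilipschitzWith (KL_inj A hA k vt hd)
    refine ⟨(K : ℝ)⁻¹, by positivity, fun e => ?_⟩
    have := hanti.le_mul_dist e 0
    simp only [dist_zero_right, map_zero] at this
    rw [inv_mul_le_iff₀ (by positivity)]
    exact this
  have horth : ∀ e, inner ℝ (WithLp.toLp 2 (P.mulVec vt)) (KL A k vt e) = 0 := by
    intro e
    have hq : ∀ t : ℝ, 0 ≤ ‖KL A k vt e‖ ^ 2 * (t * t)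
        + (-2 * inner ℝ (WithLp.toLp 2 (P.mulVec vt)) (KL A k vt e)) * t + 0 := by
      intro t
      have := hmin (ct + t • e)
      rw [hf, hf0, map_smul, norm_sub_sq_real, real_inner_smul_right, norm_smul, mul_pow,
        Real.norm_eq_abs, sq_abs] at this
      nlinarith
    have := discrim_le_zero hq
    rw [discrim] at this
    nlinarith [sq_nonneg (inner ℝ (WithLp.toLp 2 (P.mulVec vt)) (KL A k vt e))]
  have hmax' : ∀ v : Fin n → ℝ, ∃ e : Fin k → ℝ,
      ‖WithLp.toLp 2 (P.mulVec v) - KL A k v e‖ ^ 2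
        ≤ ‖WithLp.toLp 2 (P.mulVec vt)‖ ^ 2 * ‖WithLp.toLp 2 v‖ ^ 2 := by
    intro v
    by_cases hv : v = 0
    · refine ⟨0, ?_⟩
      simp [hv]
    have hr : 0 < ‖WithLp.toLp 2 v‖ := by
      rw [norm_pos_iff]
      simpa using hv
    set r := ‖WithLp.toLp 2 v‖ with hrd
    obtain ⟨c, hc⟩ := hmax (r⁻¹ • v) (by
      rw [euclNorm_eq, WithLp.toLp_smul, norm_smul, ← hrd, norm_inv, Real.norm_of_nonneg hr.le]
      field_simp)
    refine ⟨c - ct, ?_⟩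
    rw [← hf, add_sub_cancel, ← hf0]
    have hs : fFun A c (r⁻¹ • v) = (r ^ 2)⁻¹ * fFun A c v := by
      rw [fFun, fFun, Matrix.mulVec_smul, euclNorm_sq, euclNorm_sq, WithLp.toLp_smul, norm_smul,
        mul_pow, norm_inv, inv_pow, Real.norm_eq_abs, sq_abs]
    rw [hs, inv_mul_le_iff₀ (by positivity)] at hc
    linarith
  have hline : ∀ h : Fin n → ℝ, inner ℝ (WithLp.toLp 2 (P.mulVec vt)) (WithLp.toLp 2 (P.mulVec h))
      = ‖WithLp.toLp 2 (P.mulVec vt)‖ ^ 2 * inner ℝ (WithLp.toLp 2 vt) (WithLp.toLp 2 h) := by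
    intro h
    refine core_aux (KL A k vt).toContinuousLinearMap (KL A k h).toContinuousLinearMap _ _ _
      (‖WithLp.toLp 2 h‖ ^ 2) m hm hT horth ?_
    intro t
    obtain ⟨e, he⟩ := hmax' (vt + t • h)
    refine ⟨e, ?_⟩
    have e1 : KL A k (vt + t • h) e = KL A k vt e + t • KL A k h e := by
      simp [KL, Matrix.mulVec_add, Matrix.mulVec_smul]
    rw [e1, Matrix.mulVec_add, Matrix.mulVec_smul, WithLp.toLp_add, WithLp.toLp_smul,
      WithLp.toLp_add, WithLp.toLp_smul, norm_add_sq_real (WithLp.toLp 2 vt), hv1,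
      real_inner_smul_right, norm_smul, mul_pow, Real.norm_eq_abs, sq_abs] at he
    refine he.trans (le_of_eq ?_)
    ring
  have hdiff : DifferentiableAt ℝ (fun v : Fin n → ℝ => FFun A ct v) vt := by
    have e0 : (fun v : Fin n → ℝ => FFun A ct v)
        = fun v => (∑ i, (∑ j, P i j * v j) ^ 2) / (∑ i, v i * v i) := by
      funext v
      rw [FFun, hf0, EuclideanSpace.norm_sq_eq, edot]
      simp [Matrix.mulVec, dotProduct]
    rw [e0]
    have hne : ∑ i, vt i * vt i ≠ 0 := by
      have := edot_eq vt
      rw [hv1, edot] at this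
      rw [this]; norm_num
    simp only [div_eq_mul_inv]
    have d1 : DifferentiableAt ℝ (fun v : Fin n → ℝ => ∑ i, v i * v i) vt := by fun_prop
    have d2 : DifferentiableAt ℝ (fun v : Fin n → ℝ => ∑ i, (∑ j, P i j * v j) ^ 2) vt := by fun_prop
    exact d2.mul (d1.inv hne)
  ext1 h
  rw [← hdiff.lineDeriv_eq_fderiv]
  apply HasLineDerivAt.lineDeriv
  show HasDerivAt (fun t : ℝ => FFun A ct (vt + t • h)) 0 0
  set x := WithLp.toLp 2 (P.mulVec vt) with hx
  set y := WithLp.toLp 2 (P.mulVec h) with hy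
  set a : ℝ := inner ℝ (WithLp.toLp 2 vt) (WithLp.toLp 2 h) with ha
  have e2 : (fun t : ℝ => FFun A ct (vt + t • h)) = fun t =>
      (‖x‖ ^ 2 + t * (2 * (‖x‖ ^ 2 * a)) + t ^ 2 * ‖y‖ ^ 2)
        / (1 + t * (2 * a) + t ^ 2 * ‖WithLp.toLp 2 h‖ ^ 2) := by
    funext t
    rw [FFun, hf0, edot_eq, Matrix.mulVec_add, Matrix.mulVec_smul, WithLp.toLp_add,
      WithLp.toLp_smul, WithLp.toLp_add, WithLp.toLp_smul, norm_add_sq_real,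
      norm_add_sq_real (WithLp.toLp 2 vt), hv1, real_inner_smul_right, real_inner_smul_right,
      norm_smul, norm_smul, mul_pow, mul_pow, Real.norm_eq_abs, sq_abs, ← ha, hline h]
    congr 1 <;> ring
  rw [e2]
  have q : ∀ b0 b1 b2 : ℝ, HasDerivAt (fun t : ℝ => b0 + t * b1 + t ^ 2 * b2) b1 0 := by
    intro b0 b1 b2
    have := (((hasDerivAt_id' (0:ℝ)).mul_const b1).const_add b0).add
      (((hasDerivAt_id' (0:ℝ)).pow 2).mul_const b2)
    exact this.congr_deriv (by simp)
  have := (q (‖x‖ ^ 2) (2 * (‖x‖ ^ 2 * a)) (‖y‖ ^ 2)).div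
    (q 1 (2 * a) (‖WithLp.toLp 2 h‖ ^ 2)) (by simp)
  exact this.congr_deriv (by simp; try ring)
end

section
/- Let A ∈ ℝ^{n×n} be nonsingular and 1 ≤ k < d(A). If (ĉ, v̂) ∈ ℝ^k × ℝ^n with ‖v̂‖ = 1 and d(A, v̂) ≥ k is a stationary point of F(c, v) = ‖p(A; c)v‖²/(vᵀv) (i.e., both partial derivatives of F vanish at (ĉ, v̂)), then p(·; ĉ) is the k-th GMRES polynomial of A and v̂, and F(ĉ, v̂) ≤ Ψ_k(A)². Consequently, a point (c̃, ṽ) ∈ ℝ^k × ℝ^n with ‖ṽ‖ = 1 solving the worst-case GMRES problem is a stationary point of F at which the maximal value of F among all stationary points is attained. -/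
open Polynomial Matrix

lemma aux_lower {E V : Type*} [NormedAddCommGroup E] [InnerProductSpace ℝ E]
    [NormedAddCommGroup V] [NormedSpace ℝ V] [FiniteDimensional ℝ V]
    (K H : V →L[ℝ] E) (hK : Function.Injective K) (r p : E)
    (hr : ∀ e, inner ℝ r (K e) = 0) :
    ∃ C δ : ℝ, 0 < δ ∧ ∀ t : ℝ, |t| < δ → ∀ e : V,
      ‖r‖ ^ 2 + 2 * t * inner ℝ r p - C * t ^ 2 ≤ ‖(r + t • p) - (K e + t • H e)‖ ^ 2 := by
  obtain ⟨c, hc, hanti⟩ := LinearMap.exists_antilipschitzWith (K : V →ₗ[ℝ] E)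
    (LinearMap.ker_eq_bot.2 hK)
  have hc' : (0 : ℝ) < c := by exact_mod_cast hc
  have hKe : ∀ e, ‖e‖ ≤ c * ‖K e‖ := fun e => by
    have := hanti.le_mul_dist e 0
    simpa using this
  refine ⟨(‖r‖ * ‖H‖ * (2 * c) + ‖p‖) ^ 2, 1 / (2 * c * (‖H‖ + 1)), by positivity, ?_⟩
  intro t ht e
  set a := K e + t • H e with ha
  have hH : ‖H e‖ ≤ ‖H‖ * ‖e‖ := H.le_opNorm e
  have h1 : |t| * (2 * c * (‖H‖ + 1)) < 1 := by
    rwa [lt_div_iff₀ (by positivity)] at ht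
  have h2 : ‖K e‖ ≤ ‖a‖ + |t| * ‖H e‖ := by
    have : K e = a - t • H e := by simp [ha]
    calc ‖K e‖ = ‖a - t • H e‖ := by rw [← this]
      _ ≤ ‖a‖ + ‖t • H e‖ := norm_sub_le _ _
      _ = _ := by rw [norm_smul, Real.norm_eq_abs]
  have h3 : ‖e‖ ≤ 2 * c * ‖a‖ := by
    have h4 : |t| * ‖H e‖ ≤ |t| * (‖H‖ * ‖e‖) := by gcongr
    have h5 : c * (|t| * ‖H e‖) ≤ c * (|t| * (‖H‖ * ‖e‖)) := by gcongr
    have h6 : c * ‖K e‖ ≤ c * (‖a‖ + |t| * ‖H e‖) := by gcongr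
    have h7 : (|t| * (2 * c * (‖H‖ + 1))) * ‖e‖ ≤ 1 * ‖e‖ := by gcongr
    have h8 : 0 ≤ |t| * c * ‖e‖ := by positivity
    nlinarith [hKe e]
  have hrH : |inner ℝ r (H e)| ≤ ‖r‖ * ‖H‖ * (2 * c) * ‖a‖ := by
    calc |inner ℝ r (H e)| ≤ ‖r‖ * ‖H e‖ := abs_real_inner_le_norm _ _
      _ ≤ ‖r‖ * (‖H‖ * (2 * c * ‖a‖)) := by
        gcongr
        exact hH.trans (by gcongr)
      _ = _ := by ring
  have hpa : |inner ℝ p a| ≤ ‖p‖ * ‖a‖ := abs_real_inner_le_norm _ _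
  have hra : inner ℝ r a = t * inner ℝ r (H e) := by
    rw [ha, inner_add_right, hr, inner_smul_right]; simp
  have hexp : ‖(r + t • p) - a‖ ^ 2 = ‖r‖ ^ 2 + 2 * t * inner ℝ r p + t ^ 2 * ‖p‖ ^ 2
      - 2 * t * (inner ℝ r (H e) + inner ℝ p a) + ‖a‖ ^ 2 := by
    rw [norm_sub_sq_real, norm_add_sq_real, inner_add_left, hra, inner_smul_left,
      inner_smul_right, norm_smul, mul_pow, Real.norm_eq_abs, sq_abs]
    simp; ring
  rw [hexp]
  set D := ‖r‖ * ‖H‖ * (2 * c) + ‖p‖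
  have hs : |t * (inner ℝ r (H e) + inner ℝ p a)| ≤ |t| * (D * ‖a‖) := by
    rw [abs_mul]
    gcongr
    refine (abs_add_le _ _).trans ?_
    have hD : D * ‖a‖ = ‖r‖ * ‖H‖ * (2 * c) * ‖a‖ + ‖p‖ * ‖a‖ := by simp only [D]; ring
    linarith
  have := (abs_le.1 hs).2
  have hsq : |t| ^ 2 = t ^ 2 := sq_abs t
  nlinarith [sq_nonneg (‖a‖ - |t| * D), sq_nonneg (t * ‖p‖)]

lemma aux_edot {ι : Type*} [Fintype ι] (v : ι → ℝ) : edot v v = euclNorm v ^ 2 := by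
  unfold edot euclNorm
  rw [Real.sq_sqrt (Finset.sum_nonneg fun i _ => sq_nonneg _)]
  exact Finset.sum_congr rfl fun i _ => (sq _).symm

lemma aux_norm {ι : Type*} [Fintype ι] (v : ι → ℝ) :
    euclNorm v = ‖(WithLp.toLp 2 v : EuclideanSpace ℝ ι)‖ := by
  unfold euclNorm
  rw [EuclideanSpace.norm_eq]
  simp

/-- The Krylov map `c ↦ K(v)c`, with values in Euclidean space. -/
noncomputable def krylovMap {n : ℕ} (A : Matrix (Fin n) (Fin n) ℝ) (k : ℕ) (v : Fin n → ℝ) :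
    (Fin k → ℝ) →L[ℝ] EuclideanSpace ℝ (Fin n) :=
  LinearMap.toContinuousLinearMap
    ((WithLp.linearEquiv 2 ℝ (Fin n → ℝ)).symm.toLinearMap ∘ₗ (Kmat A k v).mulVecLin)

lemma krylovMap_apply {n k : ℕ} (A : Matrix (Fin n) (Fin n) ℝ) (v : Fin n → ℝ)
    (c : Fin k → ℝ) : krylovMap A k v c = WithLp.toLp 2 (Kmat A k v *ᵥ c) := rfl

lemma aux_sum {n k : ℕ} (A : Matrix (Fin n) (Fin n) ℝ) (v : Fin n → ℝ)
    (c : Fin k → ℝ) : (aeval A (∑ j : Fin k, C (c j) * X ^ ((j : ℕ) + 1))).mulVec v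
      = Kmat A k v *ᵥ c := by
  rw [map_sum, Matrix.sum_mulVec]
  ext i
  simp only [Finset.sum_apply, Kmat, Matrix.mulVec_eq_sum, map_mul, aeval_C, map_pow, aeval_X,
    ← Algebra.smul_def]
  simp [Matrix.of_apply, Finset.mul_sum, mul_comm, mul_left_comm, Matrix.smul_apply]

lemma aux_p {n k : ℕ} (A : Matrix (Fin n) (Fin n) ℝ) (v : Fin n → ℝ)
    (c : Fin k → ℝ) : (aeval A (pPoly c)).mulVec v = v - Kmat A k v *ᵥ c := by
  rw [pPoly, map_sub, Matrix.sub_mulVec, aux_sum]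
  simp

lemma aux_f {n k : ℕ} (A : Matrix (Fin n) (Fin n) ℝ) (v : Fin n → ℝ)
    (c : Fin k → ℝ) : fFun A c v = ‖WithLp.toLp 2 v - krylovMap A k v c‖ ^ 2 := by
  rw [fFun, aux_p, aux_norm, krylovMap_apply, WithLp.toLp_sub]

lemma krylovMap_add {n k : ℕ} (A : Matrix (Fin n) (Fin n) ℝ) (v h : Fin n → ℝ) (t : ℝ)
    (c : Fin k → ℝ) :
    krylovMap A k (v + t • h) c = krylovMap A k v c + t • krylovMap A k h c := by
  simp only [krylovMap_apply, ← aux_sum, Matrix.mulVec_add, Matrix.mulVec_smul, WithLp.toLp_add,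
    WithLp.toLp_smul]

lemma aux_fsmul {n k : ℕ} (A : Matrix (Fin n) (Fin n) ℝ) (v : Fin n → ℝ) (t : ℝ)
    (c : Fin k → ℝ) : fFun A c (t • v) = t ^ 2 * fFun A c v := by
  have h0 : krylovMap A k (t • v) c = t • krylovMap A k v c := by
    simp only [krylovMap_apply, ← aux_sum, Matrix.mulVec_smul, WithLp.toLp_smul]
  rw [aux_f, aux_f, h0, WithLp.toLp_smul, ← smul_sub, norm_smul, mul_pow, Real.norm_eq_abs, sq_abs]

lemma aux_surj {k : ℕ} (p : ℝ[X]) (hp : IsPik k p) : ∃ c : Fin k → ℝ, pPoly c = p := by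
  refine ⟨fun j => - p.coeff (j + 1), ?_⟩
  have h0 : p.coeff 0 = 1 := by rw [coeff_zero_eq_eval_zero]; exact hp.2
  conv_rhs => rw [p.as_sum_range_C_mul_X_pow' (Nat.lt_succ_of_le hp.1)]
  rw [Finset.sum_range_succ', h0, pPoly, Finset.sum_range]
  simp
  ring

lemma aux_pik {k : ℕ} (c : Fin k → ℝ) : IsPik k (pPoly c) := by
  constructor
  · unfold pPoly
    refine (natDegree_sub_le _ _).trans ?_
    simp only [natDegree_one, zero_le, sup_of_le_right]
    refine natDegree_sum_le_of_forall_le _ _ fun j _ => ?_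
    exact (natDegree_C_mul_X_pow_le _ _).trans (by omega)
  · simp [pPoly, eval_finsetSum]

lemma aux_diffc {n k : ℕ} (A : Matrix (Fin n) (Fin n) ℝ) (v : Fin n → ℝ)
    (c : Fin k → ℝ) : DifferentiableAt ℝ (fun c : Fin k → ℝ => FFun A c v) c := by
  unfold FFun
  simp only [aux_f, div_eq_mul_inv]
  have h : DifferentiableAt ℝ (fun c : Fin k → ℝ => WithLp.toLp 2 v - krylovMap A k v c) c :=
    (krylovMap A k v).differentiableAt.const_sub _
  exact (h.norm_sq ℝ).mul_const _

lemma aux_diffv {n k : ℕ} (A : Matrix (Fin n) (Fin n) ℝ) (v : Fin n → ℝ) (hv : euclNorm v = 1)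
    (c : Fin k → ℝ) : DifferentiableAt ℝ (fun v : Fin n → ℝ => FFun A c v) v := by
  unfold FFun
  have h1 : edot v v ≠ 0 := by rw [aux_edot, hv]; norm_num
  simp only [div_eq_mul_inv]
  refine DifferentiableAt.fun_mul ?_ (DifferentiableAt.fun_inv ?_ h1)
  · have : fFun A c
      = fun v => ∑ i, (∑ j, (aeval A (pPoly c)) i j * v j) ^ 2 := by
      ext v
      rw [fFun, ← aux_edot]
      simp [edot, Matrix.mulVec, dotProduct, sq]
    rw [this]
    fun_prop
  · unfold edot
    fun_prop

lemma aux_quad (a b c : ℝ) :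
    HasDerivAt (fun t : ℝ => a + 2 * t * b + t ^ 2 * c) (2 * b) 0 := by
  have := ((((hasDerivAt_id (0 : ℝ)).const_mul 2).mul_const b).const_add a).add
      (((hasDerivAt_id (0 : ℝ)).pow 2).mul_const c)
  refine HasDerivAt.congr_deriv this ?_
  simp

/-- Stationarity in `c` gives orthogonality of the residual. -/
lemma aux_orth {n k : ℕ} (A : Matrix (Fin n) (Fin n) ℝ) (v : Fin n → ℝ) (hv : euclNorm v = 1)
    (c : Fin k → ℝ) (h : fderiv ℝ (fun c : Fin k → ℝ => FFun A c v) c = 0) (e : Fin k → ℝ) :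
    inner ℝ (WithLp.toLp 2 v - krylovMap A k v c) (krylovMap A k v e) = 0 := by
  have hd := (aux_diffc A v c).hasFDerivAt
  rw [h] at hd
  have hl : HasDerivAt (fun t : ℝ => c + t • e) e 0 := by
    simpa using ((hasDerivAt_id (0 : ℝ)).smul_const e).const_add c
  have hd' : HasFDerivAt (fun c : Fin k → ℝ => FFun A c v) (0 : (Fin k → ℝ) →L[ℝ] ℝ)
    (c + (0 : ℝ) • e) := by simpa using hd
  have h1 := hd'.comp_hasDerivAt (0 : ℝ) hl
  set r := WithLp.toLp 2 v - krylovMap A k v c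
  set w := krylovMap A k v e
  have h2 : ((fun c : Fin k → ℝ => FFun A c v) ∘ fun t : ℝ => c + t • e)
      = fun t => ‖r‖ ^ 2 + 2 * t * (-inner ℝ r w) + t ^ 2 * ‖w‖ ^ 2 := by
    ext t
    have : WithLp.toLp 2 v - krylovMap A k v (c + t • e) = r - t • w := by
      simp only [r, w, map_add, map_smul]; abel
    simp only [Function.comp, FFun, aux_edot, hv, aux_f, this]
    rw [norm_sub_sq_real, inner_smul_right, norm_smul, mul_pow, Real.norm_eq_abs, sq_abs]
    ring
  rw [h2] at h1
  have h3 := aux_quad (‖r‖ ^ 2) (-inner ℝ r w) (‖w‖ ^ 2)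
  have := h1.unique h3
  simp at this
  exact this

lemma aux_min {n k : ℕ} (A : Matrix (Fin n) (Fin n) ℝ) (v : Fin n → ℝ) (hv : euclNorm v = 1)
    (c : Fin k → ℝ) (h : fderiv ℝ (fun c : Fin k → ℝ => FFun A c v) c = 0) (c' : Fin k → ℝ) :
    fFun A c v ≤ fFun A c' v := by
  have h1 := aux_orth A v hv c h (c' - c)
  rw [aux_f, aux_f]
  have : WithLp.toLp 2 v - krylovMap A k v c'
      = (WithLp.toLp 2 v - krylovMap A k v c) - krylovMap A k v (c' - c) := by
    rw [map_sub]; abel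
  rw [this, norm_sub_sq_real _ (krylovMap A k v (c' - c)), h1]
  nlinarith [sq_nonneg ‖krylovMap A k v (c' - c)‖]

lemma aux_F1 {n k : ℕ} (A : Matrix (Fin n) (Fin n) ℝ) (v : Fin n → ℝ) (hv : euclNorm v = 1)
    (c : Fin k → ℝ) : FFun A c v = fFun A c v := by
  simp [FFun, aux_edot, hv]

lemma aux_psi {n k : ℕ} (A : Matrix (Fin n) (Fin n) ℝ) (v : Fin n → ℝ) (hv : euclNorm v = 1)
    (c : Fin k → ℝ) (h : ∀ c' : Fin k → ℝ, fFun A c v ≤ fFun A c' v) : fFun A c v ≤ Psi A k ^ 2 := by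
  have hnn : ∀ w : Fin n → ℝ, 0 ≤ euclNorm w := fun w => Real.sqrt_nonneg _
  have h1 : euclNorm ((aeval A (pPoly c)).mulVec v) ≤ gmresVal A k v := by
    refine le_csInf ⟨_, 1, ⟨by simp, by simp⟩, rfl⟩ ?_
    rintro s ⟨p, hp, rfl⟩
    obtain ⟨c', rfl⟩ := aux_surj p hp
    exact (sq_le_sq₀ (hnn _) (hnn _)).1 (h c')
  have h2 : gmresVal A k v ≤ Psi A k := by
    refine le_csSup ⟨1, ?_⟩ ⟨v, hv, rfl⟩
    rintro r ⟨w, hw, rfl⟩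
    refine csInf_le ⟨0, ?_⟩ ⟨1, ⟨by simp, by simp⟩, by simp [hw]⟩
    rintro s ⟨p, hp, rfl⟩
    exact hnn _
  exact pow_le_pow_left₀ (hnn _) (h1.trans h2) 2

lemma aux_inj {n k : ℕ} (A : Matrix (Fin n) (Fin n) ℝ) (hA : IsUnit A) (v : Fin n → ℝ)
    (hpos : ∀ c : Fin k → ℝ, 0 < fFun A c v) : Function.Injective (krylovMap A k v) := by
  rw [injective_iff_map_eq_zero]
  intro e he
  by_contra hne
  have he' : Kmat A k v *ᵥ e = 0 := by
    rw [krylovMap_apply] at he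
    simpa using he
  rw [← aux_sum] at he'
  set q : ℝ[X] := ∑ j : Fin k, C (e j) * X ^ ((j : ℕ) + 1) with hq
  have hcoe : ∀ j : Fin k, q.coeff (j + 1) = e j := by
    intro j
    rw [hq, finsetSum_coeff, Finset.sum_eq_single j]
    · simp
    · intro b _ hb
      rw [coeff_C_mul_X_pow, if_neg]
      intro h
      exact hb (Fin.ext (by omega))
    · simp
  have hq0 : q ≠ 0 := by
    intro h0
    apply hne
    ext j
    rw [← hcoe j, h0]; simp
  have hqd : q.natDegree ≤ k := by
    refine natDegree_sum_le_of_forall_le _ _ fun j _ => ?_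
    exact (natDegree_C_mul_X_pow_le _ _).trans (by omega)
  obtain ⟨q', hq', hnd⟩ := exists_eq_pow_rootMultiplicity_mul_and_not_dvd q hq0 0
  set m := q.rootMultiplicity 0
  rw [C_0, sub_zero] at hq' hnd
  rw [X_dvd_iff] at hnd
  have hq'0 : q' ≠ 0 := fun h => hnd (by simp [h])
  have hd' : q'.natDegree ≤ k := by
    rw [hq', natDegree_mul (by simp) hq'0] at hqd
    omega
  have hz : (aeval A q').mulVec v = 0 := by
    rw [hq', map_mul, map_pow, aeval_X, ← Matrix.mulVec_mulVec] at he'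
    have hu := hA.pow m
    exact (Matrix.mulVec_injective_iff_isUnit.2 hu) (by rw [he', Matrix.mulVec_zero])
  obtain ⟨c, hc⟩ := aux_surj (k := k) (C (q'.coeff 0)⁻¹ * q')
    ⟨(natDegree_C_mul_le _ _).trans hd', by
      rw [eval_mul, eval_C, ← coeff_zero_eq_eval_zero, inv_mul_cancel₀ hnd]⟩
  have := hpos c
  rw [fFun, hc, map_mul, ← Matrix.mulVec_mulVec, hz, Matrix.mulVec_zero] at this
  simp [euclNorm] at this

lemma aux_sphere {n k : ℕ} (A : Matrix (Fin n) (Fin n) ℝ) (M : ℝ)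
    (h : ∀ v : Fin n → ℝ, euclNorm v = 1 → ∃ c : Fin k → ℝ, fFun A c v ≤ M)
    (v : Fin n → ℝ) : ∃ c : Fin k → ℝ, fFun A c v ≤ M * euclNorm v ^ 2 := by
  by_cases hv : v = 0
  · subst hv
    exact ⟨0, by simp [fFun, euclNorm]⟩
  · have hn : euclNorm v ≠ 0 := by
      rw [aux_norm]
      simpa using hv
    obtain ⟨c, hc⟩ := h ((euclNorm v)⁻¹ • v) (by
      rw [aux_norm, WithLp.toLp_smul, norm_smul, ← aux_norm, norm_inv, Real.norm_eq_abs, 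
        abs_of_nonneg (show 0 ≤ euclNorm v from Real.sqrt_nonneg _)]
      exact inv_mul_cancel₀ hn)
    refine ⟨c, ?_⟩
    rw [aux_fsmul, inv_pow, inv_mul_le_iff₀ (by positivity)] at hc
    linarith

/-- The envelope argument. -/
lemma aux_stat {n k : ℕ} (A : Matrix (Fin n) (Fin n) ℝ) (hA : IsUnit A)
    (ct : Fin k → ℝ) (vt : Fin n → ℝ) (hv : euclNorm vt = 1)
    (hmin : ∀ c : Fin k → ℝ, fFun A ct vt ≤ fFun A c vt)
    (hmax : ∀ v : Fin n → ℝ, euclNorm v = 1 → ∃ c : Fin k → ℝ, fFun A c v ≤ fFun A ct vt)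
    (hc : fderiv ℝ (fun c : Fin k → ℝ => FFun A c vt) ct = 0) :
    fderiv ℝ (fun v : Fin n → ℝ => FFun A ct v) vt = 0 := by
  have hf0 : ∀ (c : Fin k → ℝ) v, 0 ≤ fFun A c v := fun c v => sq_nonneg _
  rcases (hf0 ct vt).eq_or_lt with h0 | hpos
  · refine IsLocalMin.fderiv_eq_zero (Filter.Eventually.of_forall fun v => ?_)
    show FFun A ct vt ≤ FFun A ct v
    rw [aux_F1 A vt hv, ← h0]
    exact div_nonneg (hf0 _ _) (by rw [aux_edot]; positivity)
  have hinj := aux_inj A hA vt (fun c => hpos.trans_le (hmin c))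
  have hd := (aux_diffv A vt hv ct).hasFDerivAt
  set L := fderiv ℝ (fun v : Fin n → ℝ => FFun A ct v) vt
  ext h
  set r := WithLp.toLp 2 vt - krylovMap A k vt ct with hr
  set p := WithLp.toLp 2 h - krylovMap A k h ct with hp
  set x : EuclideanSpace ℝ (Fin n) := WithLp.toLp 2 vt with hx
  set y : EuclideanSpace ℝ (Fin n) := WithLp.toLp 2 h with hy
  have hx1 : ‖x‖ = 1 := by rw [hx, ← aux_norm, hv]
  have hM : fFun A ct vt = ‖r‖ ^ 2 := aux_f A vt ct
  -- norms along the line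
  have hline : ∀ t : ℝ, euclNorm (vt + t • h) ^ 2 = 1 + 2 * t * inner ℝ x y + t ^ 2 * ‖y‖ ^ 2 := by
    intro t
    rw [aux_norm, WithLp.toLp_add, WithLp.toLp_smul, norm_add_sq_real, hx1, inner_smul_right,
      norm_smul, mul_pow, Real.norm_eq_abs, sq_abs]
    ring
  have hfline : ∀ (t : ℝ) (e : Fin k → ℝ), fFun A (ct + e) (vt + t • h)
      = ‖(r + t • p) - (krylovMap A k vt e + t • krylovMap A k h e)‖ ^ 2 := by
    intro t e
    rw [aux_f, krylovMap_add]
    congr 2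
    simp only [hr, hp, hx, hy, map_add, WithLp.toLp_add, WithLp.toLp_smul, smul_sub, smul_add]
    abel
  have hfline0 : ∀ t : ℝ, fFun A ct (vt + t • h)
      = ‖r‖ ^ 2 + 2 * t * inner ℝ r p + t ^ 2 * ‖p‖ ^ 2 := by
    intro t
    have := hfline t 0
    rw [add_zero] at this
    rw [this, map_zero, map_zero, smul_zero, add_zero, sub_zero, norm_add_sq_real,
      inner_smul_right, norm_smul, mul_pow, Real.norm_eq_abs, sq_abs]
    ring
  obtain ⟨C', δ, hδ, hlow⟩ := aux_lower (krylovMap A k vt) (krylovMap A k h) hinj r p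
    (aux_orth A vt hv ct hc)
  have key : inner ℝ r p = ‖r‖ ^ 2 * inner ℝ x y := by
    have hq := aux_quad 0 (‖r‖ ^ 2 * inner ℝ x y - inner ℝ r p) (‖r‖ ^ 2 * ‖y‖ ^ 2 + C')
    have hloc : IsLocalMin (fun t : ℝ => 0 + 2 * t * (‖r‖ ^ 2 * inner ℝ x y - inner ℝ r p)
        + t ^ 2 * (‖r‖ ^ 2 * ‖y‖ ^ 2 + C')) 0 := by
      filter_upwards [Metric.ball_mem_nhds (0 : ℝ) hδ] with t ht
      have ht' : |t| < δ := by simpa using ht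
      obtain ⟨c, hcc⟩ := aux_sphere A _ hmax (vt + t • h)
      have h1 := hlow t ht' (c - ct)
      rw [← hfline, add_sub_cancel] at h1
      rw [hline, hM] at hcc
      nlinarith
    have := hloc.hasDerivAt_eq_zero hq
    linarith
  have hl : HasDerivAt (fun t : ℝ => vt + t • h) h 0 := by
    simpa using ((hasDerivAt_id (0 : ℝ)).smul_const h).const_add vt
  have hd' : HasFDerivAt (fun v : Fin n → ℝ => FFun A ct v) L (vt + (0 : ℝ) • h) := by
    simpa using hd
  have h1 := hd'.comp_hasDerivAt (0 : ℝ) hl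
  have h2 : ((fun v : Fin n → ℝ => FFun A ct v) ∘ fun t : ℝ => vt + t • h)
      = fun t => (‖r‖ ^ 2 + 2 * t * inner ℝ r p + t ^ 2 * ‖p‖ ^ 2) /
        (1 + 2 * t * inner ℝ x y + t ^ 2 * ‖y‖ ^ 2) := by
    ext t
    simp only [Function.comp, FFun, aux_edot, hline, hfline0]
  rw [h2] at h1
  have h3 := (aux_quad (‖r‖ ^ 2) (inner ℝ r p) (‖p‖ ^ 2)).fun_div
    (aux_quad 1 (inner ℝ x y) (‖y‖ ^ 2)) (by norm_num)
  have h4 := h1.unique h3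
  rw [h4, key]
  simp
  ring

/-- (i) If `(ĉ, v̂)` with `‖v̂‖ = 1` and `d(A,v̂) ≥ k` is a stationary point of
`F(c,v) = ‖p(A;c)v‖²/(vᵀv)`, then `p(·;ĉ)` is the `k`-th GMRES polynomial of `A` and `v̂`
(i.e. `ĉ` minimizes `c ↦ f(c,v̂)`), and `F(ĉ,v̂) ≤ Ψ_k(A)²`. (ii) Consequently, a point
`(c̃, ṽ)` with `‖ṽ‖ = 1` solving the worst-case GMRES problem is a stationary point of `F`
at which the maximal value of `F` among all stationary points is attained. -/
theorem stationary_points_and_worst_case {n : ℕ} (A : Matrix (Fin n) (Fin n) ℝ)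
    (hA : IsUnit A) (k : ℕ) (hk1 : 1 ≤ k) (hk2 : k < dA A) :
    (∀ (ch : Fin k → ℝ) (vh : Fin n → ℝ), euclNorm vh = 1 → k ≤ dAb A vh →
      fderiv ℝ (fun c : Fin k → ℝ => FFun A c vh) ch = 0 →
      fderiv ℝ (fun v : Fin n → ℝ => FFun A ch v) vh = 0 →
      (∀ c : Fin k → ℝ, fFun A ch vh ≤ fFun A c vh) ∧ FFun A ch vh ≤ Psi A k ^ 2) ∧
    (∀ (ct : Fin k → ℝ) (vt : Fin n → ℝ), euclNorm vt = 1 →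
      (∀ c : Fin k → ℝ, fFun A ct vt ≤ fFun A c vt) →
      (∀ v : Fin n → ℝ, euclNorm v = 1 → ∃ c : Fin k → ℝ, fFun A c v ≤ fFun A ct vt) →
      (fderiv ℝ (fun c : Fin k → ℝ => FFun A c vt) ct = 0 ∧
       fderiv ℝ (fun v : Fin n → ℝ => FFun A ct v) vt = 0) ∧
      (∀ (ch : Fin k → ℝ) (vh : Fin n → ℝ), euclNorm vh = 1 → k ≤ dAb A vh →
        fderiv ℝ (fun c : Fin k → ℝ => FFun A c vh) ch = 0 →
        fderiv ℝ (fun v : Fin n → ℝ => FFun A ch v) vh = 0 →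
        FFun A ch vh ≤ FFun A ct vt)) := by
  have part1 : ∀ (ch : Fin k → ℝ) (vh : Fin n → ℝ), euclNorm vh = 1 →
      fderiv ℝ (fun c : Fin k → ℝ => FFun A c vh) ch = 0 →
      ∀ c : Fin k → ℝ, fFun A ch vh ≤ fFun A c vh :=
    fun ch vh hv h c => aux_min A vh hv ch h c
  refine ⟨fun ch vh hv _ h _ => ⟨part1 ch vh hv h, ?_⟩, ?_⟩
  · rw [aux_F1 A vh hv]
    exact aux_psi A vh hv ch (part1 ch vh hv h)
  · intro ct vt hv hmin hmax
    have hc : fderiv ℝ (fun c : Fin k → ℝ => FFun A c vt) ct = 0 := by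
      refine IsLocalMin.fderiv_eq_zero (Filter.Eventually.of_forall fun c => ?_)
      show FFun A ct vt ≤ FFun A c vt
      rw [aux_F1 A vt hv, aux_F1 A vt hv]
      exact hmin c
    refine ⟨⟨hc, aux_stat A hA ct vt hv hmin hmax hc⟩, ?_⟩
    intro ch vh hvh _ h _
    obtain ⟨c, hcc⟩ := hmax vh hvh
    rw [aux_F1 A vh hvh, aux_F1 A vt hv]
    exact (part1 ch vh hvh h c).trans hcc
end

section
/- Let A = A(ω, ε) be the 4×4 Toh matrix with 0 < ω < 2 and ε > 0. If p_k(z) is a k-th worst-case GMRES polynomial of A, then the polynomial z ↦ p_k(−z) is also a k-th worst-case GMRES polynomial of A. In particular, for k = 3 one has p_3(z) ≠ p_3(−z), so the third worst-case GMRES polynomial of A is not uniquely determined. -/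
open Polynomial Matrix

set_option linter.unusedSectionVars false

section helpers
variable {ι : Type*} [Fintype ι] [DecidableEq ι]

lemma en_nonneg (v : ι → ℝ) : 0 ≤ euclNorm v := Real.sqrt_nonneg _

lemma en_sq (v : ι → ℝ) : euclNorm v ^ 2 = v ⬝ᵥ v := by
  unfold euclNorm
  rw [Real.sq_sqrt (Finset.sum_nonneg fun i _ => sq_nonneg _)]
  simp [dotProduct, sq]

lemma dot_self_nn (v : ι → ℝ) : 0 ≤ v ⬝ᵥ v := by
  rw [← en_sq]; positivity

lemma dot_self_zero {v : ι → ℝ} (h : v ⬝ᵥ v = 0) : v = 0 := dotProduct_self_eq_zero.mp h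

lemma en_smul (c : ℝ) (hc : 0 ≤ c) (v : ι → ℝ) : euclNorm (c • v) = c * euclNorm v := by
  have h : euclNorm (c • v) ^ 2 = (c * euclNorm v) ^ 2 := by
    rw [mul_pow, en_sq, en_sq]; simp [smul_dotProduct, dotProduct_smul]; ring
  exact (sq_eq_sq₀ (en_nonneg _) (mul_nonneg hc (en_nonneg _))).mp h

lemma cs_dot (u v : ι → ℝ) : (u ⬝ᵥ v) ^ 2 ≤ (u ⬝ᵥ u) * (v ⬝ᵥ v) := by
  have := Finset.sum_mul_sq_le_sq_mul_sq Finset.univ u v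
  simpa [dotProduct, sq] using this

lemma amgm_dot (K : ℝ) (hK : 0 < K) (u v : ι → ℝ) :
    -(K * (u ⬝ᵥ u) + (v ⬝ᵥ v) / K) ≤ 2 * (u ⬝ᵥ v) := by
  have h := dot_self_nn (K • u + v)
  have e : (K • u + v) ⬝ᵥ (K • u + v) = K * (K * (u ⬝ᵥ u) + (v ⬝ᵥ v) / K + 2 * (u ⬝ᵥ v)) := by
    simp only [add_dotProduct, dotProduct_add, smul_dotProduct, dotProduct_smul, smul_eq_mul]
    rw [dotProduct_comm v u]; field_simp; ring
  rw [e] at h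
  have := nonneg_of_mul_nonneg_right h hK
  linarith

lemma mulVec_bound (M : Matrix ι ι ℝ) :
    ∃ S : ℝ, 0 < S ∧ ∀ x, (M *ᵥ x) ⬝ᵥ (M *ᵥ x) ≤ S * (x ⬝ᵥ x) := by
  refine ⟨1 + ∑ i, (M i) ⬝ᵥ (M i), ?_, fun x => ?_⟩
  · have := Finset.sum_nonneg (s := Finset.univ) fun i (_ : i ∈ Finset.univ) => dot_self_nn (M i)
    linarith
  · have h : (M *ᵥ x) ⬝ᵥ (M *ᵥ x) ≤ (∑ i, (M i) ⬝ᵥ (M i)) * (x ⬝ᵥ x) := by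
      rw [Finset.sum_mul]
      unfold dotProduct
      refine Finset.sum_le_sum fun i _ => ?_
      have := cs_dot (M i) x
      unfold dotProduct at this
      simp only [mulVec, dotProduct]
      nlinarith
    have := dot_self_nn x
    nlinarith

lemma small_quad (S C z : ℝ) (hS : 0 < S)
    (h : ∀ t : ℝ, 8 * S * t ^ 2 ≤ 1 → 2 * t * z ≤ C * t ^ 2) : z = 0 := by
  by_contra hz
  have hz2 : 0 < z ^ 2 := by positivity
  set E : ℝ := 1 + |C| + 8 * S * z ^ 2 with hE
  have hE1 : 1 ≤ E := by
    have := abs_nonneg C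
    have : 0 ≤ 8 * S * z ^ 2 := by positivity
    linarith
  have hE0 : 0 < E := by linarith
  have hb : 8 * S * z ^ 2 ≤ E := by
    have := abs_nonneg C
    linarith
  have hC : C < E := by
    have := le_abs_self C
    have : 0 < 8 * S * z ^ 2 := by positivity
    linarith
  have h1 := h (z / E) (by
    rw [div_pow, ← mul_div_assoc, div_le_one (by positivity)]
    nlinarith)
  have h2 : 2 * (z / E) * z = 2 * E * z ^ 2 / E ^ 2 := by field_simp
  have h3 : C * (z / E) ^ 2 = C * z ^ 2 / E ^ 2 := by field_simp
  rw [h2, h3, div_le_div_iff_of_pos_right (by positivity)] at h1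
  nlinarith

lemma pik_one (k : ℕ) : IsPik k (1 : Polynomial ℝ) := by
  constructor <;> simp

lemma gmresVal_le_psi (A : Matrix ι ι ℝ) (k : ℕ) (v : ι → ℝ) (hv : euclNorm v = 1) :
    gmresVal A k v ≤ Psi A k := by
  unfold Psi
  refine le_csSup ⟨1, ?_⟩ ⟨v, hv, rfl⟩
  rintro r ⟨w, hw, rfl⟩
  refine csInf_le ⟨0, ?_⟩ ⟨1, pik_one k, by simp [hw]⟩
  rintro s ⟨p, _, rfl⟩
  exact en_nonneg _

lemma le_psi_of_forall (A : Matrix ι ι ℝ) (k : ℕ) (v : ι → ℝ) (X : ℝ)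
    (h : ∀ q, IsPik k q → X ≤ euclNorm ((Polynomial.aeval A q) *ᵥ v) ^ 2) :
    X ≤ Psi A k ^ 2 * (v ⬝ᵥ v) := by
  by_cases hX : X ≤ 0
  · exact hX.trans (mul_nonneg (sq_nonneg _) (dot_self_nn v))
  push Not at hX
  rw [← en_sq]
  have hv0 : 0 < euclNorm v := by
    rcases (en_nonneg v).lt_or_eq with hh | hh
    · exact hh
    · have := h 1 (pik_one k)
      simp [← hh] at this
      linarith
  have hs : euclNorm ((euclNorm v)⁻¹ • v) = 1 := by
    rw [en_smul _ (by positivity)]; field_simp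
  have h1 : Real.sqrt X / euclNorm v ≤ gmresVal A k ((euclNorm v)⁻¹ • v) := by
    refine le_csInf ⟨_, 1, pik_one k, rfl⟩ ?_
    rintro s ⟨q, hq, rfl⟩
    rw [mulVec_smul, en_smul _ (by positivity), div_eq_inv_mul]
    refine mul_le_mul_of_nonneg_left ?_ (by positivity)
    exact (Real.sqrt_le_left (en_nonneg _)).mpr (h q hq)
  have h2 := h1.trans (gmresVal_le_psi A k _ hs)
  rw [div_le_iff₀ hv0] at h2
  rw [← mul_pow]
  calc X = Real.sqrt X ^ 2 := (Real.sq_sqrt hX.le).symm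
    _ ≤ _ := by gcongr

lemma wc_orth (A : Matrix ι ι ℝ) (k : ℕ) (p : Polynomial ℝ) (b : ι → ℝ) (hp : IsPik k p)
    (hmin : ∀ q : Polynomial ℝ, IsPik k q →
      euclNorm ((Polynomial.aeval A p).mulVec b) ≤ euclNorm ((Polynomial.aeval A q).mulVec b))
    (s : Polynomial ℝ) (hs : s.natDegree ≤ k) (hs0 : s.eval 0 = 0) :
    ((aeval A p) *ᵥ b) ⬝ᵥ ((aeval A s) *ᵥ b) = 0 := by
  set r := (aeval A p) *ᵥ b
  set y := (aeval A s) *ᵥ b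
  refine small_quad 1 (y ⬝ᵥ y) _ one_pos fun t _ => ?_
  have h := hmin (p - C t * s) ⟨?_, ?_⟩
  · have h2 : euclNorm r ^ 2 ≤ _ := pow_le_pow_left₀ (en_nonneg _) h 2
    have e : (aeval A (p - C t * s)) *ᵥ b = r - t • y := by
      simp [sub_mulVec, r, y, ← Matrix.mulVec_mulVec, Algebra.algebraMap_eq_smul_one, smul_mulVec]
    rw [e, en_sq, en_sq] at h2
    simp only [sub_dotProduct, dotProduct_sub, smul_dotProduct, dotProduct_smul, smul_eq_mul] at h2
    rw [dotProduct_comm y r] at h2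
    linarith
  · exact (natDegree_sub_le _ _).trans (max_le hp.1 ((natDegree_C_mul_le _ _).trans hs))
  · simp [hp.2, hs0]

/-- the polynomial `∑ d_j z^{j+1}` as a linear function of `d`. -/
noncomputable def kpoly (k : ℕ) : (Fin k → ℝ) →ₗ[ℝ] Polynomial ℝ where
  toFun d := ∑ j : Fin k, C (d j) * X ^ ((j : ℕ) + 1)
  map_add' d e := by simp [add_mul, Finset.sum_add_distrib]
  map_smul' c d := by simp [Finset.smul_sum, smul_eq_C_mul, mul_assoc]

lemma kpoly_apply (k : ℕ) (d : Fin k → ℝ) :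
    kpoly k d = ∑ j : Fin k, C (d j) * X ^ ((j : ℕ) + 1) := rfl

lemma kpoly_deg (k : ℕ) (d : Fin k → ℝ) : (kpoly k d).natDegree ≤ k := by
  rw [kpoly_apply]
  refine natDegree_sum_le_of_forall_le _ _ fun j _ => ?_
  exact (natDegree_C_mul_X_pow_le _ _).trans j.2

lemma kpoly_eval (k : ℕ) (d : Fin k → ℝ) : (kpoly k d).eval 0 = 0 := by
  rw [kpoly_apply]; simp [eval_finset_sum]

lemma kpoly_coeff (k : ℕ) (d : Fin k → ℝ) (j : Fin k) :
    (kpoly k d).coeff ((j : ℕ) + 1) = d j := by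
  rw [kpoly_apply]
  simp only [finset_sum_coeff, coeff_C_mul_X_pow]
  rw [Finset.sum_eq_single j]
  · simp
  · intro i _ hi
    rw [if_neg]
    intro h
    exact hi (Fin.ext (by omega))
  · simp

lemma exists_kpoly (k : ℕ) (s : Polynomial ℝ) (hs : s.natDegree ≤ k) (h0 : s.eval 0 = 0) :
    ∃ d, s = kpoly k d := by
  refine ⟨fun j => s.coeff ((j : ℕ) + 1), ?_⟩
  ext n
  rcases n with _ | n
  · rw [coeff_zero_eq_eval_zero, coeff_zero_eq_eval_zero, h0, kpoly_eval]
  · by_cases hn : n < k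
    · exact (kpoly_coeff k (fun j => s.coeff ((j : ℕ) + 1)) ⟨n, hn⟩).symm
    · rw [coeff_eq_zero_of_natDegree_lt (by omega),
        coeff_eq_zero_of_natDegree_lt (by have := kpoly_deg k (fun j => s.coeff ((j : ℕ) + 1)); omega)]

/-- If `A` is injective and a nonzero polynomial of degree `≤ k` annihilates `b`,
some member of `π_k` annihilates `b`. -/
lemma exists_pik_zero (A : Matrix ι ι ℝ) (hA : ∀ v, A *ᵥ v = 0 → v = 0) (k : ℕ) (b : ι → ℝ) :
    ∀ s : Polynomial ℝ, s ≠ 0 → s.natDegree ≤ k → (aeval A s) *ᵥ b = 0 →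
      ∃ q, IsPik k q ∧ (aeval A q) *ᵥ b = 0 := by
  suffices H : ∀ n, ∀ s : Polynomial ℝ, s.natDegree ≤ n → s ≠ 0 → s.natDegree ≤ k →
      (aeval A s) *ᵥ b = 0 → ∃ q, IsPik k q ∧ (aeval A q) *ᵥ b = 0 from
    fun s => H s.natDegree s le_rfl
  intro n
  induction n with
  | zero =>
    intro s hn hs hk hz
    obtain ⟨c, rfl⟩ := natDegree_eq_zero.mp (Nat.le_zero.mp hn)
    have hc : c ≠ 0 := by simpa using hs
    refine ⟨1, pik_one k, ?_⟩
    simpa [Algebra.algebraMap_eq_smul_one, smul_mulVec, hc] using hz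
  | succ n ih =>
    intro s hn hs hk hz
    by_cases h0 : s.eval 0 = 0
    · obtain ⟨t, rfl⟩ := (dvd_iff_isRoot (p := s) (a := 0)).mpr h0
      have ht : t ≠ 0 := right_ne_zero_of_mul hs
      simp only [map_zero, sub_zero] at *
      rw [natDegree_X_mul ht] at hn hk
      refine ih t (by omega) ht (by omega) (hA _ ?_)
      simpa [Matrix.mulVec_mulVec] using hz
    · refine ⟨C (s.eval 0)⁻¹ * s, ⟨(natDegree_C_mul_le _ _).trans hk, by simp [h0]⟩, ?_⟩
      simp only [map_mul, aeval_C, Algebra.algebraMap_eq_smul_one, smul_mul_assoc, one_mul,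
        smul_mulVec, hz, smul_zero]

/-- the quadratic lower estimate -/
lemma quad_est (r u e f : ι → ℝ) (S t : ℝ) (hS : 0 < S) (hre : r ⬝ᵥ e = 0)
    (hf : f ⬝ᵥ f ≤ S * (e ⬝ᵥ e)) (ht : 8 * S * t ^ 2 ≤ 1) :
    r ⬝ᵥ r + 2 * t * (r ⬝ᵥ u) - (8 * S * (r ⬝ᵥ r) + 9 * (u ⬝ᵥ u)) * t ^ 2 ≤
      (r + e + t • (u + f)) ⬝ᵥ (r + e + t • (u + f)) := by
  have h1 := amgm_dot (8 * S) (by positivity) (t • r) f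
  have h2 := amgm_dot 8 (by norm_num) (t • u) e
  have h3 := dot_self_nn (t • u + t • f)
  have h4 := dot_self_nn (e + (2 * t) • f)
  have h5 : f ⬝ᵥ f / (8 * S) ≤ (e ⬝ᵥ e) / 8 := by
    rw [div_le_div_iff₀ (by positivity) (by norm_num)]; nlinarith
  have h6 : t ^ 2 * (f ⬝ᵥ f) ≤ (e ⬝ᵥ e) / 8 := by
    have := mul_le_mul_of_nonneg_left hf (sq_nonneg t)
    nlinarith [dot_self_nn e]
  have hu := dot_self_nn u
  have hee := dot_self_nn e
  have hff := mul_nonneg (sq_nonneg t) (dot_self_nn f)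
  simp only [add_dotProduct, dotProduct_add, smul_dotProduct, dotProduct_smul, smul_eq_mul,
    smul_add] at *
  rw [dotProduct_comm u r, dotProduct_comm e r, dotProduct_comm e u, dotProduct_comm f r,
    dotProduct_comm f u, dotProduct_comm f e] at *
  nlinarith

lemma wc_eigen (A : Matrix ι ι ℝ) (hA : ∀ v, A *ᵥ v = 0 → v = 0) (k : ℕ) (p : Polynomial ℝ)
    (b : ι → ℝ) (hp : IsPik k p) (hb : euclNorm b = 1)
    (hmin : ∀ q : Polynomial ℝ, IsPik k q →
      euclNorm ((Polynomial.aeval A p).mulVec b) ≤ euclNorm ((Polynomial.aeval A q).mulVec b))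
    (hpsi : euclNorm ((Polynomial.aeval A p).mulVec b) = Psi A k) (hpos : 0 < Psi A k) :
    (aeval A p)ᵀ *ᵥ ((aeval A p) *ᵥ b) = (Psi A k) ^ 2 • b := by
  have horth := wc_orth A k p b hp hmin
  set r := (aeval A p) *ᵥ b with hr
  -- the Krylov maps
  let T : (ι → ℝ) → ((Fin k → ℝ) →ₗ[ℝ] (ι → ℝ)) := fun v =>
    { toFun := fun d => (aeval A (kpoly k d)) *ᵥ v
      map_add' := by intro x y; simp [add_mulVec]
      map_smul' := by intro x y; simp [smul_mulVec] }
  have hT : ∀ v d, T v d = (aeval A (kpoly k d)) *ᵥ v := fun _ _ => rfl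
  have hker : LinearMap.ker (T b) = ⊥ := by
    rw [LinearMap.ker_eq_bot']
    intro d hd
    by_contra hd0
    have hk0 : kpoly k d ≠ 0 := by
      intro h
      apply hd0
      ext j
      rw [← kpoly_coeff k d j, h]; simp
    obtain ⟨q, hq, hz⟩ := exists_pik_zero A hA k b _ hk0 (kpoly_deg k d) hd
    have := hmin q hq
    rw [hz, hpsi] at this
    simp [euclNorm] at this
    linarith
  obtain ⟨g, hg⟩ := (T b).exists_leftInverse_of_injective hker
  have key : ∀ w, r ⬝ᵥ ((aeval A p) *ᵥ w) - Psi A k ^ 2 * (b ⬝ᵥ w) = 0 := by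
    intro w
    set u := (aeval A p) *ᵥ w with hu
    obtain ⟨S, hS, hSb⟩ := mulVec_bound (LinearMap.toMatrix' ((T w).comp g))
    have hSd : ∀ d, (T w d) ⬝ᵥ (T w d) ≤ S * ((T b d) ⬝ᵥ (T b d)) := by
      intro d
      have h := hSb (T b d)
      rw [LinearMap.toMatrix'_mulVec] at h
      have e : g (T b d) = d := by
        have := LinearMap.congr_fun hg d
        simpa using this
      rwa [LinearMap.comp_apply, e] at h
    have hrr : r ⬝ᵥ r = Psi A k ^ 2 := by rw [← en_sq, hpsi]
    have hbb : b ⬝ᵥ b = 1 := by rw [← en_sq, hb]; norm_num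
    refine small_quad S (8 * S * (r ⬝ᵥ r) + 9 * (u ⬝ᵥ u) + Psi A k ^ 2 * (w ⬝ᵥ w)) _ hS ?_
    intro t ht
    have h := le_psi_of_forall A k (b + t • w)
      (r ⬝ᵥ r + 2 * t * (r ⬝ᵥ u) - (8 * S * (r ⬝ᵥ r) + 9 * (u ⬝ᵥ u)) * t ^ 2) ?_
    · simp only [add_dotProduct, dotProduct_add, smul_dotProduct, dotProduct_smul,
        smul_eq_mul] at h
      rw [dotProduct_comm w b, hbb] at h
      rw [hrr] at h ⊢
      nlinarith
    · intro q hq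
      obtain ⟨d, hd⟩ := exists_kpoly k (q - p)
        ((natDegree_sub_le _ _).trans (max_le hq.1 hp.1)) (by simp [hq.2, hp.2])
      have hqd : q = p + kpoly k d := by rw [← hd]; ring
      have e : (aeval A q) *ᵥ (b + t • w) = r + T b d + t • (u + T w d) := by
        rw [hqd, map_add, add_mulVec, mulVec_add, mulVec_add, mulVec_smul, mulVec_smul,
          ← hr, ← hu, ← hT, ← hT, smul_add]
        abel
      rw [e, en_sq]
      exact quad_est r u (T b d) (T w d) S t hS
        (horth _ (kpoly_deg k d) (kpoly_eval k d)) (hSd d) ht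
  have h0 := key ((aeval A p)ᵀ *ᵥ r - Psi A k ^ 2 • b)
  refine sub_eq_zero.mp (dot_self_zero ?_)
  rw [dotProduct_mulVec, ← mulVec_transpose] at h0
  rw [← h0]
  rw [sub_dotProduct, smul_dotProduct, smul_eq_mul]

end helpers

/-- the signed flip -/
def Qm : Matrix (Fin 4) (Fin 4) ℝ :=
  !![0, 0, 0, 1; 0, 0, -1, 0; 0, 1, 0, 0; -1, 0, 0, 0]

lemma Qm_norm (v : Fin 4 → ℝ) : euclNorm (Qm *ᵥ v) = euclNorm v := by
  unfold euclNorm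
  congr 1
  simp [Qm, Fin.sum_univ_four, mulVec, dotProduct]
  ring

lemma Qm_comm (ω ε : ℝ) : -tohMatrix ω ε * Qm = Qm * (tohMatrix ω ε)ᵀ := by
  ext i j
  fin_cases i <;> fin_cases j <;> simp [Qm, tohMatrix, Matrix.mul_apply, Fin.sum_univ_four]

lemma aeval_intertwine {ι : Type*} [Fintype ι] [DecidableEq ι] (B C Q : Matrix ι ι ℝ)
    (h : B * Q = Q * C) (p : Polynomial ℝ) : aeval B p * Q = Q * aeval C p := by
  induction p using Polynomial.induction_on' with
  | add p q hp hq => simp [add_mul, mul_add, hp, hq]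
  | monomial n a =>
    have hn : B ^ n * Q = Q * C ^ n := by
      induction n with
      | zero => simp
      | succ n ih => rw [pow_succ, mul_assoc, h, ← mul_assoc, ih, mul_assoc, ← pow_succ]
    simp [aeval_monomial, Algebra.algebraMap_eq_smul_one, hn]

lemma aeval_transp {ι : Type*} [Fintype ι] [DecidableEq ι] (B : Matrix ι ι ℝ)
    (p : Polynomial ℝ) : aeval Bᵀ p = (aeval B p)ᵀ := by
  induction p using Polynomial.induction_on' with
  | add p q hp hq => simp [hp, hq]
  | monomial n a => simp [aeval_monomial, Algebra.algebraMap_eq_smul_one]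

lemma toh_flip (ω ε : ℝ) (p : Polynomial ℝ) (v : Fin 4 → ℝ) :
    (aeval (tohMatrix ω ε) (p.comp (-X))) *ᵥ (Qm *ᵥ v) =
      Qm *ᵥ ((aeval (tohMatrix ω ε) p)ᵀ *ᵥ v) := by
  have h := aeval_intertwine _ _ _ (Qm_comm ω ε) p
  rw [aeval_transp] at h
  rw [aeval_comp, map_neg, aeval_X, mulVec_mulVec, mulVec_mulVec, h]

lemma pik_flip {k : ℕ} {p : Polynomial ℝ} (h : IsPik k p) : IsPik k (p.comp (-X)) := by
  refine ⟨?_, by simp [eval_comp, h.2]⟩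
  rw [natDegree_comp]
  simpa using h.1

lemma toh_inj (ω ε : ℝ) (v : Fin 4 → ℝ) (h : tohMatrix ω ε *ᵥ v = 0) : v = 0 := by
  refine eq_zero_of_mulVec_eq_zero (M := tohMatrix ω ε) ?_ h
  rw [det_of_upperTriangular]
  · simp [tohMatrix, Fin.prod_univ_four]
  · intro i j hij
    fin_cases i <;> fin_cases j <;> simp [tohMatrix] at hij ⊢

lemma toh_part1 (ω ε : ℝ) (k : ℕ) (p : Polynomial ℝ) (h : IsWCPoly (tohMatrix ω ε) k p) :
    IsWCPoly (tohMatrix ω ε) k (p.comp (-X)) := by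
  obtain ⟨hp, b, hb, hmin, hpsi⟩ := h
  refine ⟨pik_flip hp, ?_⟩
  have hnn : 0 ≤ Psi (tohMatrix ω ε) k := hpsi ▸ en_nonneg _
  rcases hnn.lt_or_eq with hpos | hzero
  · have heig := wc_eigen _ (toh_inj ω ε) k p b hp hb hmin hpsi hpos
    have horth := wc_orth _ k p b hp hmin
    set A := tohMatrix ω ε
    set s := Psi A k
    set r := (aeval A p) *ᵥ b with hr
    have hrr : r ⬝ᵥ r = s ^ 2 := by rw [← en_sq, hpsi]
    have hbb : b ⬝ᵥ b = 1 := by rw [← en_sq, hb]; norm_num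
    have e : euclNorm ((aeval A (p.comp (-X))) *ᵥ (Qm *ᵥ (s⁻¹ • r))) = s := by
      rw [toh_flip, Qm_norm, mulVec_smul, heig, en_smul _ (by positivity),
        en_smul _ (by positivity), hb]
      field_simp
    refine ⟨Qm *ᵥ (s⁻¹ • r), ?_, ?_, e⟩
    · rw [Qm_norm, en_smul _ (by positivity), hpsi]; field_simp
    · intro q hq
      rw [e]
      have hq2 : q = (q.comp (-X)).comp (-X) := by rw [comp_assoc]; simp
      have hqf := pik_flip hq
      set qf := q.comp (-X)
      rw [hq2, toh_flip, Qm_norm, mulVec_smul, en_smul _ (by positivity)]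
      have h1 : r ⬝ᵥ ((aeval A qf) *ᵥ b) = s ^ 2 := by
        have := horth (qf - p) ((natDegree_sub_le _ _).trans (max_le hqf.1 hp.1))
          (by simp [hqf.2, hp.2])
        rw [map_sub, sub_mulVec, dotProduct_sub, ← hr, hrr] at this
        linarith
      rw [dotProduct_mulVec, ← mulVec_transpose] at h1
      have h2 := cs_dot ((aeval A qf)ᵀ *ᵥ r) b
      rw [h1, hbb, mul_one, ← en_sq] at h2
      have h3 := (sq_le_sq₀ (by positivity) (en_nonneg _)).mp h2
      rw [← div_eq_inv_mul, le_div_iff₀ hpos]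
      linarith
  · rw [← hzero] at hpsi ⊢
    have hz : (aeval (tohMatrix ω ε) p) *ᵥ b = 0 := by
      refine dot_self_zero ?_
      rw [← en_sq, hpsi]; norm_num
    have hb0 : b ≠ 0 := by
      rintro rfl
      simp [euclNorm] at hb
    have hdet := exists_mulVec_eq_zero_iff.mp ⟨b, hb0, hz⟩
    rw [← det_transpose] at hdet
    obtain ⟨v, hv0, hv⟩ := exists_mulVec_eq_zero_iff.mpr hdet
    have hvn : 0 < euclNorm v := by
      rcases (en_nonneg v).lt_or_eq with hh | hh
      · exact hh
      · exact absurd (dot_self_zero (by rw [← en_sq, ← hh]; norm_num)) hv0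
    have e : euclNorm ((aeval (tohMatrix ω ε) (p.comp (-X))) *ᵥ
        (Qm *ᵥ ((euclNorm v)⁻¹ • v))) = 0 := by
      rw [toh_flip, mulVec_smul, hv]; simp [euclNorm]
    refine ⟨Qm *ᵥ ((euclNorm v)⁻¹ • v), ?_, ?_, e⟩
    · rw [Qm_norm, en_smul _ (by positivity)]; field_simp
    · intro q _
      rw [e]; exact en_nonneg _

lemma toh_psi_pos (ω ε : ℝ) (hω : 0 < ω) (hε : 0 < ε) : Psi (tohMatrix ω ε) 3 ≠ 0 := by
  intro h0
  set y : Fin 4 → ℝ := ![-1 / (ε * ω), -1 / ω, 1 / ε, 1] with hy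
  set e : Fin 4 → ℝ := ![0, 0, 0, 1] with he
  have hyy : 0 < y ⬝ᵥ y := by
    have h3 : y 3 * y 3 = 1 := by simp [hy]
    simp only [dotProduct, Fin.sum_univ_four]
    nlinarith [mul_self_nonneg (y 0), mul_self_nonneg (y 1), mul_self_nonneg (y 2)]
  have a1 : tohMatrix ω ε *ᵥ e = ![0, 0, ε, -1] := by
    ext i
    fin_cases i <;> simp [he, tohMatrix, mulVec, dotProduct, Fin.sum_univ_four]
  have a2 : tohMatrix ω ε *ᵥ ![0, 0, ε, -1] = ![0, ω, 0, 1] := by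
    ext i
    fin_cases i <;> simp [tohMatrix, mulVec, dotProduct, Fin.sum_univ_four] <;> field_simp
  have a3 : tohMatrix ω ε *ᵥ ![0, ω, 0, 1] = ![ε * ω, -ω, ε, -1] := by
    ext i
    fin_cases i <;> simp [tohMatrix, mulVec, dotProduct, Fin.sum_univ_four]
  have := le_psi_of_forall (tohMatrix ω ε) 3 e (1 / (y ⬝ᵥ y)) ?_
  · rw [h0] at this
    have h1 : 0 < 1 / (y ⬝ᵥ y) := by positivity
    norm_num at this
    linarith [one_div (y ⬝ᵥ y)]
  · intro q hq
    obtain ⟨d, hd⟩ := exists_kpoly 3 (q - 1)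
      ((natDegree_sub_le _ _).trans (max_le hq.1 (by simp))) (by simp [hq.2])
    have hqd : q = 1 + kpoly 3 d := by rw [← hd]; ring
    have h1 : y ⬝ᵥ ((aeval (tohMatrix ω ε) q) *ᵥ e) = 1 := by
      rw [hqd, kpoly_apply]
      simp only [Fin.sum_univ_three, map_add, map_one, map_mul, aeval_C, map_pow, aeval_X,
        Algebra.algebraMap_eq_smul_one, smul_mul_assoc, one_mul, add_mulVec, smul_mulVec,
        one_mulVec, Fin.val_zero, Fin.val_one, Fin.val_two, pow_succ, pow_zero, zero_add,
        ← mulVec_mulVec]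
      rw [a1, a2, a3]
      simp [hy, he, dotProduct, Fin.sum_univ_four]
      field_simp
      ring
    have h2 := cs_dot y ((aeval (tohMatrix ω ε) q) *ᵥ e)
    rw [h1] at h2
    rw [en_sq, div_le_iff₀ hyy]
    linarith

/-- The algebraic contradiction. -/
lemma toh_algebra (ω ε g l x1 x2 y1 y2 : ℝ) (hω : 0 < ω) (hω2 : ω < 2) (hε : 0 < ε)
    (hn : x1 ^ 2 + x2 ^ 2 + y1 ^ 2 + y2 ^ 2 = 1) (hl : 0 < l)
    (e1 : (1 + g) * ((1 + g) * x1 + g * ω * y1) = l * x1)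
    (e2 : (1 + g) * ((1 + g) * x2 + g * ω * y2) = l * x2)
    (e3 : g * ω * ((1 + g) * x1 + g * ω * y1) + (1 + g) * ((1 + g) * y1) = l * y1)
    (e4 : g * ω * ((1 + g) * x2 + g * ω * y2) + (1 + g) * ((1 + g) * y2) = l * y2)
    (o1 : ((1 + g) * x1 + g * ω * y1) * (x1 + ε * x2) +
      ((1 + g) * x2 + g * ω * y2) * (-x2 + ω / ε * y1) +
      (1 + g) * y1 * (y1 + ε * y2) + (1 + g) * y2 * (-y2) = 0)
    (o2 : ((1 + g) * x1 + g * ω * y1) * (x1 + ω * y1) +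
      ((1 + g) * x2 + g * ω * y2) * (x2 + ω * y2) +
      (1 + g) * y1 * y1 + (1 + g) * y2 * y2 = 0)
    (o3 : ((1 + g) * x1 + g * ω * y1) * ((x1 + ω * y1) + ε * (x2 + ω * y2)) +
      ((1 + g) * x2 + g * ω * y2) * (-(x2 + ω * y2) + ω / ε * y1) +
      (1 + g) * y1 * (y1 + ε * y2) + (1 + g) * y2 * (-y2) = 0) : False := by
  by_cases hg : g = 0
  · subst hg
    nlinarith [mul_nonneg hω.le (sq_nonneg (x1 + y1)), mul_nonneg hω.le (sq_nonneg (x2 + y2))]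
  by_cases ha : 1 + g = 0
  · have hg1 : g = -1 := by linarith
    subst hg1
    have hx1 : x1 = 0 := by
      have : l * x1 = 0 := by rw [← e1]; ring
      simpa [hl.ne'] using this
    have hx2 : x2 = 0 := by
      have : l * x2 = 0 := by rw [← e2]; ring
      simpa [hl.ne'] using this
    subst hx1 hx2
    have : ω ^ 2 * (y1 ^ 2 + y2 ^ 2) = 0 := by linarith
    have h2 : y1 ^ 2 + y2 ^ 2 = 1 := by linarith
    rw [h2] at this
    have : 0 < ω ^ 2 := by positivity
    linarith
  set a := 1 + g with hadef
  have hne : a * g * ω ≠ 0 := mul_ne_zero (mul_ne_zero ha hg) hω.ne'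
  obtain ⟨m, hm⟩ : ∃ m, l = a ^ 2 + a * g * ω * m :=
    ⟨(l - a ^ 2) / (a * g * ω), by rw [mul_div_cancel₀ _ hne]; ring⟩
  have hy1 : y1 = m * x1 := by
    apply mul_left_cancel₀ hne; rw [hm] at e1; linarith
  have hy2 : y2 = m * x2 := by
    apply mul_left_cancel₀ hne; rw [hm] at e2; linarith
  clear_value a
  subst hy1 hy2 hm
  have hz : 0 < x1 ^ 2 + x2 ^ 2 := by
    by_contra hcon
    have h0 : x1 ^ 2 + x2 ^ 2 = 0 := le_antisymm (not_lt.mp hcon) (by positivity)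
    have : (x1 ^ 2 + x2 ^ 2) * (1 + m ^ 2) = 1 := by linarith
    rw [h0] at this
    linarith
  have k1 : a + g * ω * m = a * m ^ 2 := by
    have h : g * ω * (x1 ^ 2 + x2 ^ 2) * (a + g * ω * m - a * m ^ 2) = 0 := by
      linear_combination x1 * e3 + x2 * e4
    have := (mul_eq_zero.mp h).resolve_left (by positivity)
    linarith
  have k2 : m ^ 2 * (2 + ω * m) = 0 := by
    have h : a * (x1 ^ 2 + x2 ^ 2) * (m ^ 2 * (2 + ω * m)) = 0 := by
      linear_combination o2 - (x1 ^ 2 + x2 ^ 2) * (1 + ω * m) * k1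
    exact (mul_eq_zero.mp h).resolve_left (by positivity)
  have hm0 : m ≠ 0 := by
    rintro rfl
    apply ha; linarith
  have k3 : ω * m = -2 := by
    have := (mul_eq_zero.mp k2).resolve_left (by positivity)
    linarith
  have k4 : 2 * (x1 ^ 2 + ε * x1 * x2 - x2 ^ 2) + m * (ω / ε) * (x1 * x2) = 0 := by
    have h : a * m * m * (2 * (x1 ^ 2 + ε * x1 * x2 - x2 ^ 2) + m * (ω / ε) * (x1 * x2)) = 0 := by
      linear_combination o1 - (x1 * (x1 + ε * x2) + x2 * (-x2 + ω / ε * (m * x1))) * k1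
    exact (mul_eq_zero.mp h).resolve_left (by positivity)
  have k5 : m * (ω / ε) * (x1 * x2) = 0 := by
    have h : a * m * m * (m * (ω / ε) * (x1 * x2)) = 0 := by
      linear_combination o3 - (x1 * (x1 + ω * (m * x1) + ε * (x2 + ω * (m * x2))) +
        x2 * (-(x2 + ω * (m * x2)) + ω / ε * (m * x1))) * k1 -
        a * m * m * (x1 ^ 2 + ε * x1 * x2 - x2 ^ 2) * k3
    exact (mul_eq_zero.mp h).resolve_left (by positivity)
  have k6 : x1 * x2 = 0 := (mul_eq_zero.mp k5).resolve_left (by positivity)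
  have k7 : x1 ^ 2 = x2 ^ 2 := by
    rw [k5] at k4
    linear_combination k4 / 2 - ε * k6
  rcases mul_eq_zero.mp k6 with h | h <;> rw [h] at k7 hz <;> nlinarith

lemma toh_part2 (ω ε : ℝ) (hω : 0 < ω) (hω2 : ω < 2) (hε : 0 < ε) (p : Polynomial ℝ)
    (h : IsWCPoly (tohMatrix ω ε) 3 p) : p.comp (-X) ≠ p := by
  intro hev
  obtain ⟨hp, b, hb, hmin, hpsi⟩ := h
  have hpos : 0 < Psi (tohMatrix ω ε) 3 :=
    lt_of_le_of_ne (hpsi ▸ en_nonneg _) (toh_psi_pos ω ε hω hε).symm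
  have heig := wc_eigen _ (toh_inj ω ε) 3 p b hp hb hmin hpsi hpos
  have horth := wc_orth _ 3 p b hp hmin
  have hpe : p = 1 + C (p.coeff 2) * X ^ 2 := by
    obtain ⟨d, hd⟩ := exists_kpoly 3 (p - 1)
      ((natDegree_sub_le _ _).trans (max_le hp.1 (by simp))) (by simp [hp.2])
    have hqd : p = 1 + (C (d 0) * X + C (d 1) * X ^ 2 + C (d 2) * X ^ 3) := by
      rw [kpoly_apply, Fin.sum_univ_three] at hd
      have : p = 1 + (p - 1) := by ring
      rw [this, hd]; simp
    have ev : ∀ x : ℝ, p.eval (-x) = p.eval x := by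
      intro x
      conv_rhs => rw [← hev]
      simp [eval_comp]
    have v1 := ev 1
    have v2 := ev 2
    rw [hqd] at v1 v2
    simp at v1 v2
    have d0 : d 0 = 0 := by linarith
    have d2 : d 2 = 0 := by linarith
    rw [d0, d2] at hqd
    rw [hqd]
    simp [coeff_X, coeff_one]
  set g := p.coeff 2 with hg
  clear_value g
  have hA2 : tohMatrix ω ε ^ 2 = !![1, 0, ω, 0; 0, 1, 0, ω; 0, 0, 1, 0; 0, 0, 0, 1] := by
    rw [pow_two]
    ext i j
    fin_cases i <;> fin_cases j <;>
      simp [tohMatrix, Matrix.mul_apply, Fin.sum_univ_four] <;> field_simp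
  have hP : aeval (tohMatrix ω ε) p = !![1 + g, 0, g * ω, 0; 0, 1 + g, 0, g * ω;
      0, 0, 1 + g, 0; 0, 0, 0, 1 + g] := by
    rw [hpe]
    simp only [map_add, map_one, map_mul, aeval_C, map_pow, aeval_X, hA2,
      Algebra.algebraMap_eq_smul_one, smul_mul_assoc, one_mul]
    ext i j
    fin_cases i <;> fin_cases j <;> simp
  have o1 := horth X (by simp) (by simp)
  have o2 := horth (X ^ 2) (by simp) (by simp)
  have o3 := horth (X ^ 3) (by simp) (by simp)
  have hbb : b ⬝ᵥ b = 1 := by rw [← en_sq, hb]; norm_num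
  rw [hP] at heig o1 o2 o3
  rw [aeval_X] at o1
  rw [map_pow, aeval_X] at o2 o3
  rw [pow_succ', ← mulVec_mulVec] at o3
  rw [hA2] at o2 o3
  have e1 := congrFun heig 0
  have e2 := congrFun heig 1
  have e3 := congrFun heig 2
  have e4 := congrFun heig 3
  have hl : 0 < Psi (tohMatrix ω ε) 3 ^ 2 := by positivity
  generalize Psi (tohMatrix ω ε) 3 ^ 2 = l at e1 e2 e3 e4 hl
  simp [tohMatrix, mulVec, dotProduct, Fin.sum_univ_four] at e1 e2 e3 e4 o1 o2 o3 hbb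
  refine toh_algebra ω ε g l (b 0) (b 1) (b 2) (b 3) hω hω2 hε (by linarith) hl ?_ ?_ ?_ ?_ ?_ ?_ ?_
  · linarith
  · linarith
  · linarith
  · linarith
  · linarith
  · linarith
  · linarith

/-- For the Toh matrix `A = A(ω,ε)` with `0 < ω < 2`, `ε > 0`: if `p_k` is a
`k`-th worst-case GMRES polynomial of `A`, then so is `z ↦ p_k(-z)`; in particular, for
`k = 3`, `p_3(z) ≠ p_3(-z)`, so the third worst-case GMRES polynomial of `A` is not
uniquely determined. -/
theorem toh_worst_case_polynomial_not_unique (ω ε : ℝ)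
    (hω1 : 0 < ω) (hω2 : ω < 2) (hε : 0 < ε) :
    (∀ (k : ℕ) (p : Polynomial ℝ), IsWCPoly (tohMatrix ω ε) k p →
      IsWCPoly (tohMatrix ω ε) k (p.comp (-Polynomial.X))) ∧
    (∀ p : Polynomial ℝ, IsWCPoly (tohMatrix ω ε) 3 p → p.comp (-Polynomial.X) ≠ p) := by
  exact ⟨fun k p h => toh_part1 ω ε k p h, fun p h => toh_part2 ω ε hω1 hω2 hε p h⟩
end

section
/- Let A ∈ ℝ^{n×n} be nonsingular and 1 ≤ k ≤ d(A) − 1. Then the ideal GMRES approximation does not depend on whether the polynomials and/or the maximizing vectors are taken real or complex: φ_{k,ℝ,ℝ}(A) = φ_{k,ℂ,ℝ}(A) = φ_{k,ℝ,ℂ}(A) = φ_{k,ℂ,ℂ}(A). -/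
open Polynomial Matrix

section Helpers

lemma euclNorm_nonneg {n : ℕ} (v : Fin n → ℝ) : 0 ≤ euclNorm v := Real.sqrt_nonneg _

lemma euclNormC_nonneg {n : ℕ} (v : Fin n → ℂ) : 0 ≤ euclNormC v := Real.sqrt_nonneg _

lemma euclNormC_vecC {n : ℕ} (v : Fin n → ℝ) : euclNormC (vecC v) = euclNorm v := by
  simp [euclNormC, euclNorm, vecC]

lemma euclNorm_sq_s14 {n : ℕ} (v : Fin n → ℝ) : euclNorm v ^ 2 = ∑ i, v i ^ 2 :=
  Real.sq_sqrt (Finset.sum_nonneg fun _ _ => sq_nonneg _)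

lemma euclNormC_sq {n : ℕ} (v : Fin n → ℂ) : euclNormC v ^ 2 =
    euclNorm (fun i => (v i).re) ^ 2 + euclNorm (fun i => (v i).im) ^ 2 := by
  rw [euclNorm_sq_s14, euclNorm_sq_s14, ← Finset.sum_add_distrib, euclNormC,
    Real.sq_sqrt (Finset.sum_nonneg fun _ _ => sq_nonneg _)]
  refine Finset.sum_congr rfl fun i _ => ?_
  rw [Complex.sq_norm, Complex.normSq_apply]; ring

lemma euclNorm_re_le {n : ℕ} (v : Fin n → ℂ) :
    euclNorm (fun i => (v i).re) ≤ euclNormC v := by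
  refine (sq_le_sq₀ (euclNorm_nonneg _) (euclNormC_nonneg v)).1 ?_
  rw [euclNormC_sq]; nlinarith [sq_nonneg (euclNorm (fun i => (v i).im))]

lemma euclNorm_smul' {n : ℕ} (c : ℝ) (v : Fin n → ℝ) :
    euclNorm (c • v) = |c| * euclNorm v := by
  simp only [euclNorm, Pi.smul_apply, smul_eq_mul, mul_pow, ← Finset.mul_sum]
  rw [Real.sqrt_mul (sq_nonneg c), Real.sqrt_sq_eq_abs]

open scoped Matrix.Norms.L2Operator in
lemma exists_boundC {n : ℕ} (M : Matrix (Fin n) (Fin n) ℂ) :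
    ∃ c : ℝ, ∀ b, euclNormC (M *ᵥ b) ≤ c * euclNormC b := by
  refine ⟨‖M‖, fun b => ?_⟩
  have h := Matrix.l2_opNorm_mulVec M (WithLp.toLp 2 b)
  simpa [EuclideanSpace.norm_eq, euclNormC] using h

lemma matC_mulVec {n : ℕ} (M : Matrix (Fin n) (Fin n) ℝ) (b : Fin n → ℝ) :
    matC M *ᵥ vecC b = vecC (M *ᵥ b) := by
  ext i; simp [matC, vecC, Matrix.mulVec, dotProduct]

lemma matC_mulVec_re {n : ℕ} (M : Matrix (Fin n) (Fin n) ℝ) (b : Fin n → ℂ) :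
    (fun i => ((matC M *ᵥ b) i).re) = M *ᵥ (fun i => (b i).re) := by
  ext i; simp [matC, Matrix.mulVec, dotProduct]

lemma matC_mulVec_im {n : ℕ} (M : Matrix (Fin n) (Fin n) ℝ) (b : Fin n → ℂ) :
    (fun i => ((matC M *ᵥ b) i).im) = M *ᵥ (fun i => (b i).im) := by
  ext i; simp [matC, Matrix.mulVec, dotProduct]

lemma matC_pow {n : ℕ} (M : Matrix (Fin n) (Fin n) ℝ) (k : ℕ) :
    matC M ^ k = matC (M ^ k) := by
  have h := map_pow (Complex.ofRealHom.mapMatrix (m := Fin n)) M k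
  exact h.symm

lemma aeval_matC {n : ℕ} (A : Matrix (Fin n) (Fin n) ℝ) (p : Polynomial ℝ) :
    Polynomial.aeval (matC A) (p.map (algebraMap ℝ ℂ)) = matC (Polynomial.aeval A p) := by
  rw [Polynomial.aeval_map_algebraMap]
  exact Polynomial.aeval_algHom_apply (Complex.ofRealAm.mapMatrix (m := Fin n)) A p

/-- The coefficientwise real part of a polynomial. -/
noncomputable def rePoly (k : ℕ) (p : Polynomial ℂ) : Polynomial ℝ :=
  ∑ i ∈ Finset.range (k + 1), Polynomial.C (p.coeff i).re * Polynomial.X ^ i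

lemma rePoly_isPik {k : ℕ} {p : Polynomial ℂ} (hp : IsPikC k p) : IsPik k (rePoly k p) := by
  constructor
  · refine Polynomial.natDegree_sum_le_of_forall_le _ _ fun i hi => ?_
    refine (Polynomial.natDegree_C_mul_X_pow_le _ _).trans ?_
    have := Finset.mem_range.1 hi; omega
  · have h := hp.2
    rw [← Polynomial.coeff_zero_eq_eval_zero] at h
    rw [rePoly, Polynomial.eval_finsetSum, Finset.sum_eq_single 0] <;> simp +contextual [h]

lemma rePoly_mulVec {n k : ℕ} (A : Matrix (Fin n) (Fin n) ℝ) {p : Polynomial ℂ}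
    (hp : IsPikC k p) (b : Fin n → ℝ) :
    Polynomial.aeval A (rePoly k p) *ᵥ b =
      fun i => ((Polynomial.aeval (matC A) p *ᵥ vecC b) i).re := by
  rw [Polynomial.aeval_eq_sum_range' (Nat.lt_succ_of_le hp.1)]
  ext i
  simp only [rePoly, map_sum, Matrix.sum_mulVec, Finset.sum_apply, Complex.re_sum]
  refine Finset.sum_congr rfl fun j _ => ?_
  rw [matC_pow, Matrix.smul_mulVec, matC_mulVec]
  simp [vecC, ← Algebra.smul_def, Matrix.smul_mulVec]

lemma isPik_map {k : ℕ} {p : Polynomial ℝ} (hp : IsPik k p) :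
    IsPikC k (p.map (algebraMap ℝ ℂ)) := by
  refine ⟨Polynomial.natDegree_map_le.trans hp.1, ?_⟩
  have h := hp.2
  rw [← Polynomial.coeff_zero_eq_eval_zero] at h ⊢
  simp [h]

lemma sInf_mono_of {α β : Type*} {P : α → Prop} {Q : β → Prop} {f : α → ℝ} {g : β → ℝ}
    (hf : ∀ a, 0 ≤ f a) (hQ : ∃ b, Q b) (h : ∀ b, Q b → ∃ a, P a ∧ f a ≤ g b) :
    sInf {r : ℝ | ∃ a, P a ∧ r = f a} ≤ sInf {r : ℝ | ∃ b, Q b ∧ r = g b} := by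
  obtain ⟨b0, hb0⟩ := hQ
  refine le_csInf ⟨_, b0, hb0, rfl⟩ ?_
  rintro _ ⟨b, hb, rfl⟩
  obtain ⟨a, ha, hab⟩ := h b hb
  refine le_trans (csInf_le (show BddBelow {r : ℝ | ∃ a, P a ∧ r = f a} from ⟨0, ?_⟩) ⟨a, ha, rfl⟩) hab
  rintro _ ⟨a, -, rfl⟩
  exact hf a

lemma sSup_set_nonneg {α : Type*} {P : α → Prop} {f : α → ℝ} (hf : ∀ a, 0 ≤ f a) :
    0 ≤ sSup {r : ℝ | ∃ a, P a ∧ r = f a} := by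
  refine Real.sSup_nonneg ?_
  rintro _ ⟨a, -, rfl⟩
  exact hf a

lemma bdd_CC {n : ℕ} (M : Matrix (Fin n) (Fin n) ℂ) :
    BddAbove {s : ℝ | ∃ b : Fin n → ℂ, euclNormC b = 1 ∧ s = euclNormC (M *ᵥ b)} := by
  obtain ⟨c, hc⟩ := exists_boundC M
  refine ⟨c, ?_⟩
  rintro _ ⟨b, hb, rfl⟩
  simpa [hb] using hc b

lemma bdd_CR {n : ℕ} (M : Matrix (Fin n) (Fin n) ℂ) :
    BddAbove {s : ℝ | ∃ b : Fin n → ℝ, euclNorm b = 1 ∧ s = euclNormC (M *ᵥ vecC b)} := by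
  refine (bdd_CC M).mono ?_
  rintro _ ⟨b, hb, rfl⟩
  exact ⟨vecC b, by rw [euclNormC_vecC, hb], rfl⟩

lemma bdd_RR {n : ℕ} (M : Matrix (Fin n) (Fin n) ℝ) :
    BddAbove {s : ℝ | ∃ b : Fin n → ℝ, euclNorm b = 1 ∧ s = euclNorm (M *ᵥ b)} := by
  refine (bdd_CR (matC M)).mono ?_
  rintro _ ⟨b, hb, rfl⟩
  exact ⟨b, hb, by rw [matC_mulVec, euclNormC_vecC]⟩

lemma le_sup_mul {n : ℕ} (M : Matrix (Fin n) (Fin n) ℝ) (x : Fin n → ℝ) :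
    euclNorm (M *ᵥ x) ≤
      sSup {s : ℝ | ∃ b : Fin n → ℝ, euclNorm b = 1 ∧ s = euclNorm (M *ᵥ b)} * euclNorm x := by
  rcases (euclNorm_nonneg x).eq_or_lt with h | h
  · obtain ⟨c, hc⟩ := exists_boundC (matC M)
    have := hc (vecC x)
    rw [matC_mulVec, euclNormC_vecC, euclNormC_vecC, ← h] at this
    rw [← h]; simpa using this
  · have := le_csSup (bdd_RR M) ⟨(euclNorm x)⁻¹ • x, by
      rw [euclNorm_smul', abs_of_pos (inv_pos.2 h), inv_mul_cancel₀ h.ne'], rfl⟩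
    rw [Matrix.mulVec_smul, euclNorm_smul', abs_of_pos (inv_pos.2 h)] at this
    rwa [inv_mul_le_iff₀' h] at this

end Helpers

/-- The ideal GMRES approximation of a nonsingular real matrix does not depend
on whether the polynomials and/or the maximizing vectors are real or complex:
`φ_{k,ℝ,ℝ}(A) = φ_{k,ℂ,ℝ}(A) = φ_{k,ℝ,ℂ}(A) = φ_{k,ℂ,ℂ}(A)`. -/
theorem ideal_gmres_real_eq_complex {n : ℕ} (A : Matrix (Fin n) (Fin n) ℝ)
    (hA : IsUnit A) (k : ℕ) (hk1 : 1 ≤ k) (hk2 : k ≤ dA A - 1) :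
    phiRR A k = phiCR A k ∧ phiCR A k = phiRC A k ∧ phiRC A k = phiCC A k := by
  have hR : ∃ p, IsPik k p := ⟨1, by simp [IsPik]⟩
  have hC : ∃ p, IsPikC k p := ⟨1, by simp [IsPikC]⟩
  have h1 : phiRR A k ≤ phiCR A k := by
    refine sInf_mono_of (fun p => sSup_set_nonneg fun b => euclNorm_nonneg _) hC
      fun p hp => ⟨rePoly k p, rePoly_isPik hp, ?_⟩
    refine Real.sSup_le ?_ (sSup_set_nonneg fun b => euclNormC_nonneg _)
    rintro _ ⟨b, hb, rfl⟩
    rw [rePoly_mulVec A hp]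
    exact (euclNorm_re_le _).trans (le_csSup (bdd_CR _) ⟨b, hb, rfl⟩)
  have h2 : phiCR A k ≤ phiCC A k := by
    refine sInf_mono_of (fun p => sSup_set_nonneg fun b => euclNormC_nonneg _) hC
      fun p hp => ⟨p, hp, ?_⟩
    refine Real.sSup_le ?_ (sSup_set_nonneg fun b => euclNormC_nonneg _)
    rintro _ ⟨b, hb, rfl⟩
    exact le_csSup (bdd_CC _) ⟨vecC b, by rw [euclNormC_vecC, hb], rfl⟩
  have h3 : phiCC A k ≤ phiRC A k :=
    sInf_mono_of (fun p => sSup_set_nonneg fun b => euclNormC_nonneg _) hR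
      fun p hp => ⟨p.map (algebraMap ℝ ℂ), isPik_map hp, le_rfl⟩
  have h4 : phiRC A k ≤ phiRR A k := by
    refine sInf_mono_of (fun p => sSup_set_nonneg fun b => euclNormC_nonneg _) hR
      fun p hp => ⟨p, hp, ?_⟩
    have hS := sSup_set_nonneg (P := fun b : Fin n → ℝ => euclNorm b = 1)
      (f := fun b => euclNorm (Polynomial.aeval A p *ᵥ b)) fun b => euclNorm_nonneg _
    refine Real.sSup_le ?_ hS
    rintro _ ⟨b, hb, rfl⟩
    refine (sq_le_sq₀ (euclNormC_nonneg _) hS).1 ?_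
    rw [aeval_matC, euclNormC_sq, matC_mulVec_re, matC_mulVec_im]
    have e1 := pow_le_pow_left₀ (euclNorm_nonneg _)
      (le_sup_mul (Polynomial.aeval A p) fun i => (b i).re) 2
    have e2 := pow_le_pow_left₀ (euclNorm_nonneg _)
      (le_sup_mul (Polynomial.aeval A p) fun i => (b i).im) 2
    have e3 := euclNormC_sq b
    rw [hb] at e3
    refine (add_le_add e1 e2).trans ?_
    rw [mul_pow, mul_pow, ← mul_add, ← e3]
    simp
  refine ⟨?_, ?_, ?_⟩ <;> linarith
end

section
/- Let A = A(ω, ε) be the 4×4 Toh matrix with 0 < ω < 2 and ε > 0, and let B ∈ ℝ^{8×8} be the block diagonal matrix B = diag(A, A). Then Ψ_{3,ℝ,ℝ}(B) = φ_3(A), i.e., the third (real) worst-case GMRES approximation of B equals the third ideal GMRES approximation of A. -/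
open Polynomial Matrix

lemma toh_aeval {ι : Type*} [Fintype ι] [DecidableEq ι] (A : Matrix ι ι ℝ) (q : Polynomial ℝ)
    (hq : IsPik 3 q) : Polynomial.aeval A q =
      1 + q.coeff 1 • A + q.coeff 2 • (A * A) + q.coeff 3 • (A * A * A) := by
  have h0 : q.coeff 0 = 1 := by rw [Polynomial.coeff_zero_eq_eval_zero]; exact hq.2
  rw [Polynomial.aeval_eq_sum_range' (n := 4) (Nat.lt_succ_of_le hq.1)]
  simp [Finset.sum_range_succ, h0, pow_succ]

lemma toh_sq (ω ε : ℝ) (hε : 0 < ε) : tohMatrix ω ε * tohMatrix ω ε =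
    !![1, 0, ω, 0; 0, 1, 0, ω; 0, 0, 1, 0; 0, 0, 0, 1] := by
  have := hε.ne'
  ext i j
  fin_cases i <;> fin_cases j <;>
    simp [tohMatrix, Matrix.mul_apply, Fin.sum_univ_four] <;> field_simp

lemma toh_cube (ω ε : ℝ) (hε : 0 < ε) : tohMatrix ω ε * tohMatrix ω ε * tohMatrix ω ε =
    !![1, ε, ω, ω * ε; 0, -1, ω / ε, -ω; 0, 0, 1, ε; 0, 0, 0, -1] := by
  have := hε.ne'
  rw [toh_sq ω ε hε]
  ext i j
  fin_cases i <;> fin_cases j <;>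
    simp [tohMatrix, Matrix.mul_apply, Fin.sum_univ_four]

lemma toh_explicit (ω ε : ℝ) (hε : 0 < ε) (q : Polynomial ℝ) (hq : IsPik 3 q) :
    ∃ a b c : ℝ, a = q.coeff 1 ∧ b = q.coeff 2 ∧ c = q.coeff 3 ∧
    Polynomial.aeval (tohMatrix ω ε) q =
    !![1 + a + b + c, (a + c) * ε, (b + c) * ω, c * ω * ε;
       0, 1 - a + b - c, (a + c) * (ω / ε), (b - c) * ω;
       0, 0, 1 + a + b + c, (a + c) * ε;
       0, 0, 0, 1 - a + b - c] := by
  refine ⟨_, _, _, rfl, rfl, rfl, ?_⟩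
  rw [toh_aeval _ q hq, toh_cube ω ε hε, toh_sq ω ε hε]
  ext i j
  fin_cases i <;> fin_cases j <;> simp [tohMatrix] <;> ring

lemma toh_fromBlocks (A : Matrix (Fin 4) (Fin 4) ℝ) (q : Polynomial ℝ) (hq : IsPik 3 q) :
    Polynomial.aeval (Matrix.fromBlocks A 0 0 A) q =
      Matrix.fromBlocks (Polynomial.aeval A q) 0 0 (Polynomial.aeval A q) := by
  rw [toh_aeval _ q hq, toh_aeval _ q hq]
  simp [Matrix.fromBlocks_multiply, Matrix.fromBlocks_smul, Matrix.fromBlocks_add,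
    ← Matrix.fromBlocks_one]

noncomputable def tohP (ω : ℝ) : Polynomial ℝ :=
  1 - Polynomial.C ((4 - ω ^ 2) / (4 + ω ^ 2)) * Polynomial.X ^ 2

lemma tohP_pik (ω : ℝ) : IsPik 3 (tohP ω) := by
  constructor
  · unfold tohP; compute_degree; norm_num
  · simp [tohP]

lemma toh_upper (ω ε : ℝ) (hε : 0 < ε) (hω1 : 0 < ω) (hω2 : ω < 2) (v : Fin 4 → ℝ) :
    ∑ i, ((Polynomial.aeval (tohMatrix ω ε) (tohP ω)).mulVec v i) ^ 2 ≤
      (4 * ω / (4 + ω ^ 2)) ^ 2 * ∑ i, v i ^ 2 := by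
  obtain ⟨a, b, c, ha, hb, hc, h⟩ := toh_explicit ω ε hε _ (tohP_pik ω)
  have ha : a = 0 := by rw [ha]; simp [tohP, Polynomial.coeff_one, Polynomial.coeff_X_pow]
  have hb : b = -((4 - ω ^ 2) / (4 + ω ^ 2)) := by
    rw [hb]; simp [tohP, Polynomial.coeff_one, Polynomial.coeff_X_pow]
  have hc : c = 0 := by rw [hc]; simp [tohP, Polynomial.coeff_one, Polynomial.coeff_X_pow]
  rw [h, ha, hc]
  have hd : 0 < 4 + ω ^ 2 := by positivity
  simp [Matrix.mulVec, dotProduct, Fin.sum_univ_four]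
  have key : ∀ x y : ℝ, ((1 + b) * x + b * ω * y) ^ 2 + ((1 + b) * y) ^ 2 ≤
      (4 * ω / (4 + ω ^ 2)) ^ 2 * (x ^ 2 + y ^ 2) := by
    intro x y
    have : (4 * ω / (4 + ω ^ 2)) ^ 2 * (x ^ 2 + y ^ 2) -
      (((1 + b) * x + b * ω * y) ^ 2 + ((1 + b) * y) ^ 2) =
      (4 - ω ^ 2) * ω ^ 2 / (4 + ω ^ 2) ^ 2 * (2 * x + ω * y) ^ 2 := by
      rw [hb]; field_simp; ring
    have h4 : 0 ≤ 4 - ω ^ 2 := by nlinarith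
    have h5 : 0 ≤ (4 - ω ^ 2) * ω ^ 2 / (4 + ω ^ 2) ^ 2 * (2 * x + ω * y) ^ 2 := by positivity
    linarith
  have h1 := key (v 0) (v 2)
  have h2 := key (v 1) (v 3)
  nlinarith [h1, h2]

lemma toh_lower (ω ε : ℝ) (hε : 0 < ε) (q : Polynomial ℝ) (hq : IsPik 3 q) :
    let M := Polynomial.aeval (tohMatrix ω ε) q
    (2 * (M.mulVec ![ω, 0, -2, 0]) 0 - ω * (M.mulVec ![ω, 0, -2, 0]) 2) +
    (2 * (M.mulVec ![0, ω, 0, -2]) 1 - ω * (M.mulVec ![0, ω, 0, -2]) 3) = 8 * ω := by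
  obtain ⟨a, b, c, -, -, -, h⟩ := toh_explicit ω ε hε q hq
  intro M
  simp only [M, h]
  simp [Matrix.mulVec, dotProduct, Fin.sum_univ_four]
  ring

lemma euclNorm_nonneg' {ι : Type*} [Fintype ι] (v : ι → ℝ) : 0 ≤ euclNorm v := Real.sqrt_nonneg _

lemma specSet_bdd {ι : Type*} [Fintype ι] (M : Matrix ι ι ℝ) :
    BddAbove {r : ℝ | ∃ v : ι → ℝ, euclNorm v = 1 ∧ r = euclNorm (M *ᵥ v)} := by
  refine ⟨Real.sqrt (∑ i, ∑ j, M i j ^ 2), ?_⟩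
  rintro r ⟨v, hv, rfl⟩
  have hv' : ∑ i, v i ^ 2 = 1 := by simpa [euclNorm] using hv
  apply Real.sqrt_le_sqrt
  apply Finset.sum_le_sum
  intro i _
  have := Finset.sum_mul_sq_le_sq_mul_sq Finset.univ (fun j => M i j) v
  rw [hv', mul_one] at this
  exact this

lemma euclNorm_smul'_s15 {ι : Type*} [Fintype ι] (k : ℝ) (hk : 0 ≤ k) (v : ι → ℝ) :
    euclNorm (k • v) = k * euclNorm v := by
  unfold euclNorm
  simp only [Pi.smul_apply, smul_eq_mul, mul_pow, ← Finset.mul_sum]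
  rw [Real.sqrt_mul (sq_nonneg k), Real.sqrt_sq hk]

/-- Cauchy-Schwarz lower bound. -/
lemma toh_cs {ι : Type*} [Fintype ι] (u v : ι → ℝ) (m D : ℝ) (hD : 0 < D)
    (hu : ∑ i, u i ^ 2 = D) (h : m ≤ ∑ i, u i * v i) : m / Real.sqrt D ≤ euclNorm v := by
  have h2 : ∑ i, u i * v i ≤ Real.sqrt (∑ i, u i ^ 2) * euclNorm v :=
    Real.sum_mul_le_sqrt_mul_sqrt _ _ _
  rw [hu] at h2
  rw [div_le_iff₀ (Real.sqrt_pos.mpr hD)]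
  linarith

lemma phi_toh (ω ε : ℝ) (hω1 : 0 < ω) (hω2 : ω < 2) (hε : 0 < ε) :
    phiIdeal (tohMatrix ω ε) 3 = 4 * ω / (4 + ω ^ 2) := by
  have hd : 0 < 4 + ω ^ 2 := by positivity
  have hs := Real.sqrt_pos.mpr hd
  have hss := Real.mul_self_sqrt hd.le
  have hlow : ∀ q, IsPik 3 q → 4 * ω / (4 + ω ^ 2) ≤ specNorm (aeval (tohMatrix ω ε) q) := by
    intro q hq
    have hl := toh_lower ω ε hε q hq
    have fin : ∀ (b : Fin 4 → ℝ), ∑ i, b i ^ 2 = 4 + ω ^ 2 →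
        4 * ω / √(4 + ω ^ 2) ≤ euclNorm ((aeval (tohMatrix ω ε) q).mulVec b) →
        4 * ω / (4 + ω ^ 2) ≤ specNorm (aeval (tohMatrix ω ε) q) := by
      intro b hb h
      have hk : 0 ≤ (√(4 + ω ^ 2))⁻¹ := by positivity
      have : (√(4 + ω ^ 2))⁻¹ * euclNorm ((aeval (tohMatrix ω ε) q).mulVec b) ≤
          specNorm (aeval (tohMatrix ω ε) q) := by
        apply le_csSup (specSet_bdd _)
        refine ⟨(√(4 + ω ^ 2))⁻¹ • b, ?_, ?_⟩
        · rw [euclNorm_smul'_s15 _ hk, euclNorm, hb, inv_mul_cancel₀ hs.ne']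
        · rw [Matrix.mulVec_smul, euclNorm_smul'_s15 _ hk]
      refine le_trans ?_ this
      calc 4 * ω / (4 + ω ^ 2) = (√(4 + ω ^ 2))⁻¹ * (4 * ω / √(4 + ω ^ 2)) := by
            rw [← hss, Real.sqrt_mul_self hs.le]; field_simp
        _ ≤ _ := mul_le_mul_of_nonneg_left h hk
    by_cases hc : 4 * ω ≤ 2 * ((aeval (tohMatrix ω ε) q).mulVec ![ω, 0, -2, 0]) 0
        - ω * ((aeval (tohMatrix ω ε) q).mulVec ![ω, 0, -2, 0]) 2
    · apply fin ![ω, 0, -2, 0]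
      · simp [Fin.sum_univ_four]; ring
      · apply toh_cs ![2, 0, -ω, 0] _ _ _ hd
        · simp [Fin.sum_univ_four]; ring
        · rw [Fin.sum_univ_four]
          simp only [Matrix.cons_val]
          linarith
    · apply fin ![0, ω, 0, -2]
      · simp [Fin.sum_univ_four]; ring
      · apply toh_cs ![0, 2, 0, -ω] _ _ _ hd
        · simp [Fin.sum_univ_four]; ring
        · rw [Fin.sum_univ_four]
          simp only [Matrix.cons_val]
          simp only at hl
          linarith
  apply le_antisymm
  · refine le_trans (csInf_le ⟨4 * ω / (4 + ω ^ 2), ?_⟩ ⟨tohP ω, tohP_pik ω, rfl⟩) ?_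
    · rintro r ⟨q, hq, rfl⟩
      exact hlow q hq
    · apply csSup_le
      · exact ⟨_, ![1, 0, 0, 0], by simp [euclNorm, Fin.sum_univ_four], rfl⟩
      · rintro r ⟨v, hv, rfl⟩
        have hv' : ∑ i, v i ^ 2 = 1 := by simpa [euclNorm] using hv
        have := toh_upper ω ε hε hω1 hω2 v
        rw [hv', mul_one] at this
        exact Real.sqrt_le_iff.mpr ⟨by positivity, this⟩
  · apply le_csInf
    · exact ⟨_, tohP ω, tohP_pik ω, rfl⟩
    · rintro r ⟨q, hq, rfl⟩
      exact hlow q hq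

lemma Psi_toh (ω ε : ℝ) (hω1 : 0 < ω) (hω2 : ω < 2) (hε : 0 < ε) :
    Psi (Matrix.fromBlocks (tohMatrix ω ε) 0 0 (tohMatrix ω ε)) 3 = 4 * ω / (4 + ω ^ 2) := by
  have hd : 0 < 4 + ω ^ 2 := by positivity
  have hup : ∀ v : Fin 4 ⊕ Fin 4 → ℝ, euclNorm v = 1 →
      gmresVal (Matrix.fromBlocks (tohMatrix ω ε) 0 0 (tohMatrix ω ε)) 3 v
        ≤ 4 * ω / (4 + ω ^ 2) := by
    intro v hv
    have hv' : ∑ i, v i ^ 2 = 1 := by simpa [euclNorm] using hv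
    refine le_trans (csInf_le ⟨0, ?_⟩ ⟨tohP ω, tohP_pik ω, rfl⟩) ?_
    · rintro r ⟨q, hq, rfl⟩
      exact euclNorm_nonneg' _
    · rw [toh_fromBlocks _ _ (tohP_pik ω), Matrix.fromBlocks_mulVec]
      have h1 := toh_upper ω ε hε hω1 hω2 (v ∘ Sum.inl)
      have h2 := toh_upper ω ε hε hω1 hω2 (v ∘ Sum.inr)
      rw [Fintype.sum_sum_type] at hv'
      apply Real.sqrt_le_iff.mpr ⟨by positivity, ?_⟩
      simp only [Fintype.sum_sum_type, Sum.elim_inl, Sum.elim_inr, Matrix.zero_mulVec, add_zero,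
        zero_add]
      refine (add_le_add h1 h2).trans (le_of_eq ?_)
      rw [← mul_add]
      simp only [Function.comp]
      rw [hv', mul_one]
  apply le_antisymm
  · apply csSup_le
    · exact ⟨_, Sum.elim ![1, 0, 0, 0] 0, by simp [euclNorm, Fin.sum_univ_four], rfl⟩
    · rintro r ⟨v, hv, rfl⟩
      exact hup v hv
  · have hD : 0 < 2 * (4 + ω ^ 2) := by positivity
    have hs := Real.sqrt_pos.mpr hD
    have hss := Real.mul_self_sqrt hD.le
    have hk : 0 ≤ (√(2 * (4 + ω ^ 2)))⁻¹ := by positivity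
    set b : Fin 4 ⊕ Fin 4 → ℝ := Sum.elim ![ω, 0, -2, 0] ![0, ω, 0, -2] with hb
    have hbn : euclNorm ((√(2 * (4 + ω ^ 2)))⁻¹ • b) = 1 := by
      rw [euclNorm_smul'_s15 _ hk, euclNorm]
      have : ∑ i, b i ^ 2 = 2 * (4 + ω ^ 2) := by
        simp [hb, Fin.sum_univ_four]; ring
      rw [this, inv_mul_cancel₀ hs.ne']
    refine le_trans ?_ (le_csSup ⟨4 * ω / (4 + ω ^ 2), ?_⟩ ⟨_, hbn, rfl⟩)
    · apply le_csInf
      · exact ⟨_, tohP ω, tohP_pik ω, rfl⟩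
      · rintro r ⟨q, hq, rfl⟩
        have hl := toh_lower ω ε hε q hq
        rw [Matrix.mulVec_smul, euclNorm_smul'_s15 _ hk, toh_fromBlocks _ _ hq,
          Matrix.fromBlocks_mulVec]
        have h := toh_cs (Sum.elim ![2, 0, -ω, 0] ![0, 2, 0, -ω]) (Sum.elim
          ((aeval (tohMatrix ω ε) q).mulVec ![ω, 0, -2, 0])
          ((aeval (tohMatrix ω ε) q).mulVec ![0, ω, 0, -2])) (8 * ω) _ hD
          (by simp [Fin.sum_univ_four]; ring)
          (by
            rw [Fintype.sum_sum_type]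
            simp only [Sum.elim_inl, Sum.elim_inr, Fin.sum_univ_four, Matrix.cons_val]
            simp only at hl
            linarith)
        simp only [hb, Matrix.zero_mulVec, add_zero, zero_add, Sum.elim_comp_inl,
          Sum.elim_comp_inr]
        calc 4 * ω / (4 + ω ^ 2)
            = (√(2 * (4 + ω ^ 2)))⁻¹ * (8 * ω / √(2 * (4 + ω ^ 2))) := by
              have : 4 * ω / (4 + ω ^ 2) = 8 * ω / (2 * (4 + ω ^ 2)) := by field_simp; norm_num
              rw [this]
              nth_rewrite 1 [← hss]
              field_simp
          _ ≤ _ := mul_le_mul_of_nonneg_left h hk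
    · rintro r ⟨v, hv, rfl⟩
      exact hup v hv

/-- For the Toh matrix `A = A(ω,ε)` with `0 < ω < 2`, `ε > 0`, and the block
diagonal matrix `B = diag(A,A) ∈ ℝ^{8×8}`, one has `Ψ_{3,ℝ,ℝ}(B) = φ_3(A)`. -/
theorem toh_block_diag_worst_case_eq_ideal (ω ε : ℝ)
    (hω1 : 0 < ω) (hω2 : ω < 2) (hε : 0 < ε) :
    Psi (Matrix.fromBlocks (tohMatrix ω ε) 0 0 (tohMatrix ω ε)) 3
      = phiIdeal (tohMatrix ω ε) 3 := by
  rw [Psi_toh ω ε hω1 hω2 hε, phi_toh ω ε hω1 hω2 hε]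
end
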